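/- arXiv:1504.05293 — 2 statements merged into one kernel-verified Lean document; each statement's English description precedes it below -/
import Mathlib

section
/- For every γ ∈ {0, 1, 3, 5, 7, 10} and δ = 10 − γ, the complete graph K₂₁ admits a decomposition of its edge set into γ C₃-factors and δ C₇-factors. -/
open SimpleGraph

/-- `F` is an `H`-factor (of the complete graph on its vertex type, or of any graph
containing it): every connected component of `F`, viewed as an induced subgraph,
is isomorphic to `H`.  Since `F` is a graph on all of `V`, it is automatically spanning. -/
def IsHFactor {V W : Type*} (H : SimpleGraph W) (F : SimpleGraph V) : Prop :=
  ∀ c : F.ConnectedComponent, Nonempty (F.induce c.supp ≃g H)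

/-- A `C_k`-factor: a spanning subgraph each of whose connected components is a
cycle of length `k` (in particular it is 2-regular). -/
def IsCycleFactor {V : Type*} (k : ℕ) (F : SimpleGraph V) : Prop :=
  IsHFactor (SimpleGraph.cycleGraph k) F

/-- `(G; C_m^r, C_k^s)`: a partition of the edge set of `G` into `r` `C_m`-factors
and `s` `C_k`-factors. -/
def IsCycleDecomp {V : Type*} (G : SimpleGraph V) (m k r s : ℕ) : Prop :=
  ∃ F : Fin r ⊕ Fin s → SimpleGraph V,
    (∀ i, F i ≤ G) ∧
    (∀ e ∈ G.edgeSet, ∃! i, e ∈ (F i).edgeSet) ∧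
    (∀ i : Fin r, IsCycleFactor m (F (Sum.inl i))) ∧
    (∀ j : Fin s, IsCycleFactor k (F (Sum.inr j)))

/-!
The difference method: let a group `A` act on the vertices and take a list of cycle factors that is
closed under translation, so made of factors fixed by `A` and of full orbits of base factors. Such a
list decomposes the complete graph as soon as every edge at a set of orbit representatives lies in
exactly one factor.

For `γ ≠ 5` the vertices are three rows `ℤ/7`. The fixed factors available are the transversal
triangle factors, one for each mixed difference, and the factors that run through each row in
constant steps, one for each difference `±d`. Seven triangle factors and three row factors settle
`γ = 7`; in the other cases three fixed factors are kept and the remaining edges are covered by the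
seven translates of a base factor. All of these factors are also invariant under
`(i, x) ↦ (i + 1, 2 x)`, which has order 3 because `2 ^ 3 = 1` in `ℤ/7`, so only one cycle of a
base `C₇`-factor has to be found. For `γ = 5` the vertices are four rows `ℤ/5` and a fixed point,
and each kind of factor is the orbit of one base factor.
-/

section Transport

variable {V V' W : Type*} {G : SimpleGraph V} {G' : SimpleGraph V'} {H : SimpleGraph W}

theorem IsHFactor.of_iso (h : IsHFactor H G) (φ : G ≃g G') : IsHFactor H G' := by
  intro c
  obtain ⟨d, rfl⟩ := φ.connectedComponentEquiv.surjective c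
  obtain ⟨ψ⟩ := h d
  let φd : G.induce d.supp ≃g G'.induce (φ.connectedComponentEquiv d).supp :=
    ⟨ConnectedComponent.isoEquivSupp φ d, φ.map_adj_iff⟩
  exact ⟨φd.symm.trans ψ⟩

theorem IsCycleFactor.comap_equiv {k : ℕ} (h : IsCycleFactor k G) (e : V' ≃ V) :
    IsCycleFactor k (G.comap e) :=
  IsHFactor.of_iso h (Iso.comap e G).symm

theorem IsCycleDecomp.of_iso {m k r s : ℕ} (h : IsCycleDecomp G m k r s) (φ : G ≃g G') :
    IsCycleDecomp G' m k r s := by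
  obtain ⟨F, hle, hpart, hm, hk⟩ := h
  refine ⟨fun i ↦ (F i).comap φ.symm, fun i u v huv ↦ φ.symm.map_adj_iff.mp (hle i huv), ?_,
    fun i ↦ (hm i).comap_equiv φ.symm.toEquiv, fun j ↦ (hk j).comap_equiv φ.symm.toEquiv⟩
  rintro ⟨u, v⟩ huv
  exact hpart s(φ.symm u, φ.symm v) (φ.symm.map_adj_iff.mpr huv)

theorem IsCycleDecomp.top_of_card_eq [Fintype V] [Fintype V'] {m k r s : ℕ}
    (h : IsCycleDecomp (⊤ : SimpleGraph V) m k r s) (hcard : Fintype.card V = Fintype.card V') :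
    IsCycleDecomp (⊤ : SimpleGraph V') m k r s :=
  h.of_iso (Iso.completeGraph (Fintype.equivOfCardEq hcard))

theorem isCycleDecomp_of_existsUnique_adj {ι κ : Type*} [Fintype ι] [Fintype κ] {m k : ℕ}
    {F : ι → SimpleGraph V} {F' : κ → SimpleGraph V}
    (hF : ∀ i, IsCycleFactor m (F i)) (hF' : ∀ j, IsCycleFactor k (F' j))
    (hle : ∀ i, Sum.elim F F' i ≤ G)
    (hpart : ∀ u v, G.Adj u v → ∃! i, (Sum.elim F F' i).Adj u v) :
    IsCycleDecomp G m k (Fintype.card ι) (Fintype.card κ) := by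
  let e := ((Fintype.equivFin ι).sumCongr (Fintype.equivFin κ)).symm
  refine ⟨Sum.elim F F' ∘ e, fun i ↦ hle (e i), ?_, fun _ ↦ hF _, fun _ ↦ hF' _⟩
  rintro ⟨u, v⟩ huv
  exact e.bijective.existsUnique_iff.mp (hpart u v huv)

end Transport

section DisjointCycles

variable {V ι W : Type*}

theorem isHFactor_bot_boxProd {H : SimpleGraph W} (hH : H.Preconnected) :
    IsHFactor H ((⊥ : SimpleGraph ι) □ H) := by
  intro c
  obtain ⟨⟨i, w⟩, rfl⟩ := c.exists_rep
  have mem_supp (p : ι × W) :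
      p ∈ (((⊥ : SimpleGraph ι) □ H).connectedComponentMk (i, w)).supp ↔ p.1 = i := by
    simp [ConnectedComponent.mem_supp_iff, reachable_boxProd, hH p.2 w]
  refine ⟨⟨⟨fun p ↦ p.1.2, fun x ↦ ⟨(i, x), (mem_supp _).mpr rfl⟩, ?_, fun _ ↦ rfl⟩, ?_⟩⟩
  · rintro ⟨⟨j, x⟩, hj⟩
    obtain rfl : j = i := (mem_supp _).mp hj
    rfl
  · rintro ⟨⟨j, x⟩, hj⟩ ⟨⟨j', y⟩, hj'⟩
    obtain rfl : j = i := (mem_supp _).mp hj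
    obtain rfl : j' = j := (mem_supp _).mp hj'
    simp [boxProd_adj]

/-- The graph formed by the closed walks `c i 0, c i 1, …, c i n, c i 0`. When `c` enumerates the
vertices without repetition, these are disjoint cycles of length `n + 1`. -/
def cyclesGraph {n : ℕ} (c : ι → Fin (n + 1) → V) : SimpleGraph V :=
  .fromRel fun u v ↦ ∃ i t, c i t = u ∧ c i (t + 1) = v

variable {n : ℕ} {c : ι → Fin (n + 1) → V}

instance [DecidableEq V] [Fintype ι] : DecidableRel (cyclesGraph c).Adj :=
  fun _ _ ↦ inferInstanceAs (Decidable (_ ∧ _))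

theorem isCycleFactor_cyclesGraph (hc : (Function.uncurry c).Bijective) :
    IsCycleFactor (n + 1) (cyclesGraph c) := by
  refine (isHFactor_bot_boxProd (ι := ι) cycleGraph_preconnected).of_iso
    ⟨.ofBijective _ hc, ?_⟩
  have succ_iff (i j : ι) (s t : Fin (n + 1)) :
      (∃ l x, c l x = c i s ∧ c l (x + 1) = c j t) ↔ i = j ∧ t - s = 1 := by
    constructor
    · rintro ⟨l, x, hs, ht⟩
      obtain ⟨rfl, rfl⟩ := Prod.mk.inj (hc.injective (a₁ := (l, x)) (a₂ := (i, s)) hs)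
      obtain ⟨rfl, rfl⟩ := Prod.mk.inj (hc.injective (a₁ := (l, x + 1)) (a₂ := (j, t)) ht)
      exact ⟨rfl, by simp⟩
    · rintro ⟨rfl, h⟩
      exact ⟨i, s, rfl, by rw [← h, add_sub_cancel]⟩
  rintro ⟨i, s⟩ ⟨j, t⟩
  have ne_iff : c i s ≠ c j t ↔ (i, s) ≠ (j, t) := hc.injective.ne_iff (x := (i, s)) (y := (j, t))
  simp only [cyclesGraph, Equiv.ofBijective_apply, Function.uncurry_apply_pair, fromRel_adj,
    succ_iff, ne_iff, cycleGraph_eq_circulantGraph, boxProd_adj, circulantGraph_adj,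
    Set.mem_singleton_iff, bot_adj, Prod.mk.injEq, ne_eq]
  grind

end DisjointCycles

section DifferenceMethod

variable {A V : Type*}

instance instAddActionOption [AddMonoid A] [AddAction A V] : AddAction A (Option V) where
  zero_vadd v := by cases v <;> simp
  add_vadd a b v := by cases v <;> simp [add_vadd]

theorem comap_vadd_cyclesGraph [AddGroup A] [AddAction A V] {ι : Type*} {n : ℕ}
    {c : ι → Fin (n + 1) → V} (hc : ∀ (a : A) i, ∃ j s, ∀ t, a +ᵥ c i t = c j (t + s)) (a : A) :
    (cyclesGraph c).comap (a +ᵥ ·) = cyclesGraph c := by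
  have succ_vadd {b : A} {u v : V} :
      (∃ i t, c i t = u ∧ c i (t + 1) = v) → ∃ i t, c i t = b +ᵥ u ∧ c i (t + 1) = b +ᵥ v := by
    rintro ⟨i, t, rfl, rfl⟩
    obtain ⟨j, s, hj⟩ := hc b i
    exact ⟨j, t + s, (hj t).symm, by rw [hj, add_right_comm]⟩
  have adj_vadd {b : A} {u v : V} (h : (cyclesGraph c).Adj u v) :
      (cyclesGraph c).Adj (b +ᵥ u) (b +ᵥ v) :=
    ⟨(AddAction.injective b).ne h.1, h.2.imp succ_vadd succ_vadd⟩
  ext u v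
  refine ⟨fun h ↦ ?_, adj_vadd⟩
  simpa using adj_vadd (b := -a) h

/-- A family of `C_k`-factors of the complete graph on `V` whose members are permuted by the
translations `v ↦ a +ᵥ v`. -/
structure IsTranslationClosed (A : Type*) [VAdd A V] {ι : Type*} (k : ℕ)
    (F : ι → SimpleGraph V) : Prop where
  isCycleFactor (i : ι) : IsCycleFactor k (F i)
  exists_perm (a : A) : ∃ σ : Equiv.Perm ι, ∀ i, (F i).comap (a +ᵥ ·) = F (σ i)

namespace IsTranslationClosed

variable {ι κ : Type*} {k m : ℕ} {F : ι → SimpleGraph V} {F' : κ → SimpleGraph V}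

theorem sumElim [VAdd A V] (hF : IsTranslationClosed A k F) (hF' : IsTranslationClosed A k F') :
    IsTranslationClosed A k (Sum.elim F F') := by
  refine ⟨Sum.rec hF.isCycleFactor hF'.isCycleFactor, fun a ↦ ?_⟩
  obtain ⟨σ, hσ⟩ := hF.exists_perm a
  obtain ⟨τ, hτ⟩ := hF'.exists_perm a
  exact ⟨σ.sumCongr τ, Sum.rec hσ hτ⟩

variable [AddGroup A] [AddAction A V]

theorem of_cyclesGraph {ν : ι → Type*} {n : ℕ} {c : ∀ i, ν i → Fin (n + 1) → V}
    (hbij : ∀ i, (Function.uncurry (c i)).Bijective)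
    (hvadd : ∀ i (a : A) x, ∃ y s, ∀ t, a +ᵥ c i x t = c i y (t + s)) :
    IsTranslationClosed A (n + 1) fun i ↦ cyclesGraph (c i) :=
  ⟨fun i ↦ isCycleFactor_cyclesGraph (hbij i),
    fun a ↦ ⟨1, fun i ↦ comap_vadd_cyclesGraph (hvadd i) a⟩⟩

theorem translates {B : SimpleGraph V} (hB : IsCycleFactor k B) :
    IsTranslationClosed A k fun a : A ↦ B.comap (a +ᵥ ·) where
  isCycleFactor a := hB.comap_equiv (AddAction.toPerm a)
  exists_perm b := ⟨Equiv.addRight b, fun a ↦ by ext; simp [add_vadd]⟩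

theorem existsUnique_adj_of_vadd (hF : IsTranslationClosed A k F)
    (hF' : IsTranslationClosed A m F') (a : A) {u v : V}
    (h : ∃! i, (Sum.elim F F' i).Adj (a +ᵥ u) (a +ᵥ v)) : ∃! i, (Sum.elim F F' i).Adj u v := by
  obtain ⟨σ, hσ⟩ := hF.exists_perm a
  obtain ⟨τ, hτ⟩ := hF'.exists_perm a
  have hστ : ∀ i, (Sum.elim F F' i).comap (a +ᵥ ·) = Sum.elim F F' (σ.sumCongr τ i) :=
    Sum.rec hσ hτ
  refine (σ.sumCongr τ).bijective.existsUnique_iff.mpr ?_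
  simpa only [← hστ, comap_adj] using h

theorem isCycleDecomp_top [Fintype ι] [Fintype κ] (hF : IsTranslationClosed A m F)
    (hF' : IsTranslationClosed A k F') (T : Finset V) (hT : ∀ u, ∃ a : A, a +ᵥ u ∈ T)
    (hadj : ∀ u ∈ T, ∀ v, v ≠ u → ∃! i, (Sum.elim F F' i).Adj u v) :
    IsCycleDecomp (⊤ : SimpleGraph V) m k (Fintype.card ι) (Fintype.card κ) := by
  refine isCycleDecomp_of_existsUnique_adj hF.isCycleFactor hF'.isCycleFactor
    (fun _ ↦ le_top) fun u v huv ↦ ?_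
  obtain ⟨a, ha⟩ := hT u
  exact hF.existsUnique_adj_of_vadd hF' a (hadj _ ha _ ((AddAction.injective a).ne huv.symm))

end IsTranslationClosed

instance {ι : Type*} [Fintype ι] {p : ι → Prop} [DecidablePred p] : Decidable (∃! i, p i) :=
  decidable_of_iff _ (Fintype.existsUnique_iff_card_one p).symm

instance {ι κ : Type*} {F : ι → SimpleGraph V} {F' : κ → SimpleGraph V}
    [∀ i, DecidableRel (F i).Adj] [∀ j, DecidableRel (F' j).Adj] :
    ∀ i, DecidableRel (Sum.elim F F' i).Adj
  | .inl i => inferInstanceAs (DecidableRel (F i).Adj)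
  | .inr j => inferInstanceAs (DecidableRel (F' j).Adj)

end DifferenceMethod

section RowsOfSeven

set_option synthInstance.maxSize 512

/-- Three rows, each a copy of `ℤ/7`. This is a sigma type rather than a product so that `ℤ/7` acts
by translation within the rows. -/
abbrev Rows₇ : Type := Σ _ : Fin 3, ZMod 7

/-- One vertex of each row: representatives of the orbits of `ℤ/7`. -/
def rowOrigins : Finset Rows₇ := {⟨0, 0⟩, ⟨1, 0⟩, ⟨2, 0⟩}

theorem exists_vadd_mem_rowOrigins (u : Rows₇) : ∃ a : ZMod 7, a +ᵥ u ∈ rowOrigins := by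
  decide +revert +kernel

/-- For each row `i`, the 7-cycle that runs through it in steps of `2 ^ i * d`. -/
def rowCycles (d : ZMod 7) (i : Fin 3) (t : Fin 7) : Rows₇ := ⟨i, 2 ^ (i : ℕ) * d * (t : ℕ)⟩

/-- The triangles meeting every row once whose edges from row `i` to row `i + 1` have difference
`2 ^ i * b`; the sum of these three differences is `7 * b = 0`. -/
def transversalTriangles (b x : ZMod 7) (t : Fin 3) : Rows₇ := ⟨t, x + 2 ^ (t : ℕ) * b⟩

/-- The images of the closed walk `t ↦ (row t, 2 ^ row t * y t)` under the powers of the multiplier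
`(i, x) ↦ (i + 1, 2 * x)`. -/
def multiplierCycles (row : Fin 7 → Fin 3) (y : Fin 7 → ZMod 7) (i : Fin 3) (t : Fin 7) : Rows₇ :=
  ⟨i + row t, 2 ^ (i + row t : Fin 3).val * y t⟩

theorem isTranslationClosed_rowCycles {ι : Type*} (d : ι → ZMod 7) (hd : ∀ i, d i ≠ 0) :
    IsTranslationClosed (ZMod 7) 7 fun i ↦ cyclesGraph (rowCycles (d i)) := by
  have hbij : ∀ d ≠ 0, (Function.uncurry (rowCycles d)).Bijective := by decide +kernel
  have hvadd : ∀ d ≠ 0, ∀ (a : ZMod 7) i, ∃ j s, ∀ t,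
      a +ᵥ rowCycles d i t = rowCycles d j (t + s) := by decide +kernel
  exact .of_cyclesGraph (fun i ↦ hbij _ (hd i)) fun i ↦ hvadd _ (hd i)

theorem isTranslationClosed_transversalTriangles {ι : Type*} (b : ι → ZMod 7) :
    IsTranslationClosed (ZMod 7) 3 fun i ↦ cyclesGraph (transversalTriangles (b i)) := by
  have hbij : ∀ b, (Function.uncurry (transversalTriangles b)).Bijective := by decide +kernel
  refine .of_cyclesGraph (fun i ↦ hbij _) fun i a x ↦ ⟨a + x, 0, fun t ↦ ?_⟩
  simp [transversalTriangles, add_assoc]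

theorem isCycleFactor_multiplierCycles (row : Fin 7 → Fin 3) {y : Fin 7 → ZMod 7}
    (hy : y.Injective) : IsCycleFactor 7 (cyclesGraph (multiplierCycles row y)) := by
  have two_pow_mul_injective :
      ∀ (r : Fin 3) (a b : ZMod 7), 2 ^ (r : ℕ) * a = 2 ^ (r : ℕ) * b → a = b := by decide +kernel
  refine isCycleFactor_cyclesGraph
    ((Fintype.bijective_iff_injective_and_card _).mpr ⟨?_, by decide⟩)
  rintro ⟨i, s⟩ ⟨j, t⟩ h
  obtain ⟨hrow, hpos⟩ := Sigma.mk.inj h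
  obtain rfl : s = t := hy (two_pow_mul_injective _ _ _ (hrow ▸ eq_of_heq hpos))
  exact Prod.ext (add_right_cancel hrow) rfl

theorem isCycleDecomp_zero_ten : IsCycleDecomp (⊤ : SimpleGraph Rows₇) 3 7 0 10 := by
  have base_factor := isCycleFactor_multiplierCycles
    ![0, 2, 1, 0, 1, 0, 1] (y := ![0, 1, 2, 3, 4, 6, 5]) (by decide)
  exact (isTranslationClosed_transversalTriangles ![]).isCycleDecomp_top
    ((isTranslationClosed_rowCycles ![1, 2, 3] (by decide)).sumElim (.translates base_factor))
    rowOrigins exists_vadd_mem_rowOrigins (by decide +kernel)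

theorem isCycleDecomp_one_nine : IsCycleDecomp (⊤ : SimpleGraph Rows₇) 3 7 1 9 := by
  have base_factor := isCycleFactor_multiplierCycles
    ![0, 1, 2, 0, 1, 2, 2] (y := ![0, 1, 2, 3, 4, 5, 6]) (by decide)
  exact (isTranslationClosed_transversalTriangles ![0]).isCycleDecomp_top
    ((isTranslationClosed_rowCycles ![2, 3] (by decide)).sumElim (.translates base_factor))
    rowOrigins exists_vadd_mem_rowOrigins (by decide +kernel)

theorem isCycleDecomp_three_seven : IsCycleDecomp (⊤ : SimpleGraph Rows₇) 3 7 3 7 := by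
  have base_factor := isCycleFactor_multiplierCycles
    ![0, 0, 1, 0, 1, 1, 1] (y := ![0, 1, 2, 4, 5, 3, 6]) (by decide)
  exact (isTranslationClosed_transversalTriangles ![1, 2, 4]).isCycleDecomp_top
    (.translates base_factor) rowOrigins exists_vadd_mem_rowOrigins (by decide +kernel)

theorem isCycleDecomp_seven_three : IsCycleDecomp (⊤ : SimpleGraph Rows₇) 3 7 7 3 :=
  (isTranslationClosed_transversalTriangles id).isCycleDecomp_top
    (isTranslationClosed_rowCycles ![1, 2, 3] (by decide))
    rowOrigins exists_vadd_mem_rowOrigins (by decide +kernel)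

theorem isCycleDecomp_ten_zero : IsCycleDecomp (⊤ : SimpleGraph Rows₇) 3 7 10 0 := by
  -- `{1, 2, 4}` and `{3, 5, 6}` are the cosets of the powers of `2` in the units of `ℤ/7`.
  let base : Fin 4 ⊕ Fin 3 → Fin 3 → Rows₇ :=
    Sum.elim (fun q t ↦ ⟨t, 4 ^ (t : ℕ) * ![0, 1, 2, 4] q⟩) (fun i t ↦ ⟨i, ![3, 5, 6] t⟩)
  have base_factor : IsCycleFactor 3 (cyclesGraph base) :=
    isCycleFactor_cyclesGraph (by decide +kernel)
  exact ((isTranslationClosed_transversalTriangles ![1, 2, 4]).sumElim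
      (.translates base_factor)).isCycleDecomp_top
    (isTranslationClosed_rowCycles ![] (by decide))
    rowOrigins exists_vadd_mem_rowOrigins (by decide +kernel)

end RowsOfSeven

section RowsOfFive

set_option synthInstance.maxSize 512

/-- Four rows, each a copy of `ℤ/5`, and a point `none` that `ℤ/5` fixes. -/
abbrev PointedRows₅ : Type := Option (Σ _ : Fin 4, ZMod 5)

theorem isCycleDecomp_five_five : IsCycleDecomp (⊤ : SimpleGraph PointedRows₅) 3 7 5 5 := by
  let triangles : Fin 7 → Fin 3 → PointedRows₅ :=
    ![![some ⟨1, 0⟩, some ⟨1, 3⟩, some ⟨2, 1⟩],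
      ![some ⟨0, 3⟩, some ⟨2, 2⟩, some ⟨2, 4⟩],
      ![some ⟨1, 4⟩, some ⟨2, 3⟩, some ⟨3, 2⟩],
      ![some ⟨0, 0⟩, some ⟨0, 1⟩, some ⟨3, 3⟩],
      ![some ⟨1, 2⟩, some ⟨3, 4⟩, some ⟨3, 1⟩],
      ![some ⟨0, 2⟩, some ⟨0, 4⟩, some ⟨1, 1⟩],
      ![none, some ⟨3, 0⟩, some ⟨2, 0⟩]]
  let heptagons : Fin 3 → Fin 7 → PointedRows₅ :=
    ![![some ⟨0, 3⟩, some ⟨3, 3⟩, some ⟨3, 2⟩, some ⟨1, 2⟩, some ⟨1, 1⟩, some ⟨2, 1⟩, some ⟨1, 4⟩],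
      ![none, some ⟨1, 3⟩, some ⟨3, 4⟩, some ⟨2, 2⟩, some ⟨0, 4⟩, some ⟨3, 0⟩, some ⟨0, 1⟩],
      ![some ⟨0, 0⟩, some ⟨2, 0⟩, some ⟨3, 1⟩, some ⟨2, 3⟩, some ⟨2, 4⟩, some ⟨0, 2⟩, some ⟨1, 0⟩]]
  have triangles_factor : IsCycleFactor 3 (cyclesGraph triangles) :=
    isCycleFactor_cyclesGraph (by decide +kernel)
  have heptagons_factor : IsCycleFactor 7 (cyclesGraph heptagons) :=
    isCycleFactor_cyclesGraph (by decide +kernel)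
  exact (IsTranslationClosed.translates (A := ZMod 5) triangles_factor).isCycleDecomp_top
    (.translates heptagons_factor)
    {none, some ⟨0, 0⟩, some ⟨1, 0⟩, some ⟨2, 0⟩, some ⟨3, 0⟩} (by decide +kernel)
    (by decide +kernel)

end RowsOfFive

/-- Lemma 3.1: `(K₂₁; C₃^γ, C₇^δ)` exists for `γ ∈ {0,1,3,5,7,10}` with `γ + δ = 10`. -/
theorem K21_cycle_decomp_basic (γ δ : ℕ) (hγ : γ ∈ ({0, 1, 3, 5, 7, 10} : Set ℕ))
    (hγδ : γ + δ = 10) :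
    IsCycleDecomp (⊤ : SimpleGraph (Fin 21)) 3 7 γ δ := by
  rcases hγ with rfl | rfl | rfl | rfl | rfl | rfl
  · obtain rfl : δ = 10 := by omega
    exact isCycleDecomp_zero_ten.top_of_card_eq (by decide)
  · obtain rfl : δ = 9 := by omega
    exact isCycleDecomp_one_nine.top_of_card_eq (by decide)
  · obtain rfl : δ = 7 := by omega
    exact isCycleDecomp_three_seven.top_of_card_eq (by decide)
  · obtain rfl : δ = 5 := by omega
    exact isCycleDecomp_five_five.top_of_card_eq (by decide)
  · obtain rfl : δ = 3 := by omega
    exact isCycleDecomp_seven_three.top_of_card_eq (by decide)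
  · obtain rfl : δ = 0 := by omega
    exact isCycleDecomp_ten_zero.top_of_card_eq (by decide)
end

section
/- Let t ≥ 0, n = 42t + 21, let α₁, …, α_{3t} ∈ {0, 1, 3, 5, 7} with β_i = 7 − α_i for each i, and let γ ∈ {0, 1, 3, 5, 7, 8, 9, 10} with δ = 10 − γ. Then there exists a decomposition of K_n into (Σ_{i=1}^{3t} α_i) + γ C₃-factors and (Σ_{i=1}^{3t} β_i) + δ C₇-factors; that is, HW(n; Σα_i + γ, Σβ_i + δ; 3, 7) exists. -/
open SimpleGraph

/-!
A factor whose cycles all have prime length `p` is the same as a fixed-point-free map of order `p`,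
so a decomposition into triangle and heptagon factors is a family of such maps in which every pair
of points occurs exactly once.

Take a Kirkman triple system on `6 t + 3` points and replace each point by a copy of `ZMod 7`. In
all classes but one, a triangle becomes a complete tripartite graph on `21` points, which splits
into `αᵢ` triangle factors and `βᵢ` heptagon factors. In the last class it becomes a complete graph
on `21` points, which covers the pairs inside the copies and splits into `γ` and `δ` factors.

Kirkman triple systems on `6 t + 3` points exist for every `t` by induction (Ray-Chaudhuri and
Wilson). A system with `3 t + 1` classes has one triangle through a fixed point in each class, and
systems attached to the blocks of a pairwise balanced design on `3 t + 1` points glue along these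
triangles. Such designs come from group divisible designs: truncate a transversal design with five
groups of size nine or coprime to six, give every point weight three, and add one point. The orders
that this misses are covered by constructions over finite fields of order `6 j + 1`, by a product
construction, and by a design on `34` points.
-/

section Orbits

universe u

variable {V : Type u} {W Q : Type*}

theorem isHFactor_of_iso_bot_boxProd {F : SimpleGraph V} {H : SimpleGraph W} (hH : H.Preconnected)
    (e : F ≃g (⊥ : SimpleGraph Q) □ H) : IsHFactor H F := by
  intro c
  induction c using ConnectedComponent.ind with | _ v =>
  have mem_supp (u : V) : u ∈ (F.connectedComponentMk v).supp ↔ (e u).1 = (e v).1 := by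
    rw [ConnectedComponent.mem_supp_iff, ConnectedComponent.eq, ← e.reachable_iff,
      reachable_boxProd, reachable_bot]
    exact and_iff_left (hH _ _)
  refine ⟨⟨⟨fun u => (e u).2, fun w => ⟨e.symm ((e v).1, w), (mem_supp _).2 (by simp)⟩,
    fun u => ?_, fun w => by simp⟩, fun {a b} => ?_⟩⟩
  · exact Subtype.ext (e.symm_apply_eq.2 (Prod.ext ((mem_supp u).1 u.2).symm rfl))
  · have hab : (e a).1 = (e b).1 := ((mem_supp a).1 a.2).trans ((mem_supp b).1 b.2).symm
    rw [comap_adj, Function.Embedding.subtype_apply, Function.Embedding.subtype_apply,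
      ← e.map_adj_iff, boxProd_adj]
    simp [hab]

variable {p : ℕ} [Fact p.Prime] {σ : V → V}

theorem iterate_val_add (hσ : ∀ v, σ^[p] v = v) (a b : ZMod p) (v : V) :
    σ^[(a + b).val] v = σ^[a.val] (σ^[b.val] v) := by
  rw [ZMod.val_add, Function.IsPeriodicPt.iterate_mod_apply (hσ v), Function.iterate_add_apply]

theorem exists_equiv_prod_zmod (hσ : ∀ v, σ^[p] v = v) (hfix : ∀ v, σ v ≠ v) :
    ∃ (Q : Type u) (e : V ≃ Q × ZMod p), ∀ v, e (σ v) = ((e v).1, (e v).2 + 1) := by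
  let orbit : Setoid V :=
    { r := fun u v => ∃ n : ZMod p, σ^[n.val] u = v
      iseqv :=
        { refl := fun u => ⟨0, by simp⟩
          symm := by
            rintro u _ ⟨n, rfl⟩
            exact ⟨-n, by rw [← iterate_val_add hσ]; simp⟩
          trans := by
            rintro u _ _ ⟨m, rfl⟩ ⟨n, rfl⟩
            exact ⟨n + m, iterate_val_add hσ n m u⟩ } }
  let label : Quotient orbit × ZMod p → V := fun x => σ^[x.2.val] x.1.out
  have label_add_one (q : Quotient orbit) (n : ZMod p) : label (q, n + 1) = σ (label (q, n)) := by
    simp only [label]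
    rw [add_comm, iterate_val_add hσ, ZMod.val_one, Function.iterate_one]
  have mk_label (q : Quotient orbit) (n : ZMod p) : Quotient.mk orbit (label (q, n)) = q := by
    conv_rhs => rw [← q.out_eq]
    exact (Quotient.sound ⟨n, rfl⟩ : (⟦q.out⟧ : Quotient orbit) = _).symm
  have bijective : Function.Bijective label := by
    refine ⟨?_, fun v => ?_⟩
    · rintro ⟨q, m⟩ ⟨q', n⟩ h
      obtain rfl : q = q' := by rw [← mk_label q m, h, mk_label]
      have period : Function.minimalPeriod σ q.out = p :=
        Function.minimalPeriod_eq_prime (hσ _) (hfix _)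
      have hval : m.val = n.val := Function.iterate_injOn_Iio_minimalPeriod
        (by simpa [period] using m.val_lt) (by simpa [period] using n.val_lt) h
      rw [ZMod.val_injective p hval]
    · obtain ⟨n, hn⟩ := Quotient.exact (Quotient.out_eq (Quotient.mk orbit v))
      exact ⟨(_, n), hn⟩
  let e := Equiv.ofBijective label bijective
  refine ⟨_, e.symm, fun v => ?_⟩
  obtain ⟨⟨q, n⟩, rfl⟩ := e.surjective v
  rw [e.symm_apply_apply, Equiv.symm_apply_eq]
  exact (label_add_one q n).symm

/-- The graph joining each point to its image; for `σ` of prime order `p` without fixed points it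
is a disjoint union of `p`-cycles. -/
def orbitGraph (σ : V → V) : SimpleGraph V := SimpleGraph.fromRel fun u v => σ u = v

theorem orbitGraph_adj (hfix : ∀ v, σ v ≠ v) {u v : V} :
    (orbitGraph σ).Adj u v ↔ σ u = v ∨ σ v = u := by
  refine (fromRel_adj _ u v).trans (and_iff_right_of_imp ?_)
  rintro (rfl | rfl)
  exacts [(hfix u).symm, hfix v]

theorem isCycleFactor_orbitGraph (hσ : ∀ v, σ^[p] v = v) (hfix : ∀ v, σ v ≠ v) :
    IsCycleFactor p (orbitGraph σ) := by
  obtain ⟨Q, e, he⟩ := exists_equiv_prod_zmod hσ hfix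
  obtain ⟨n, rfl⟩ : ∃ n, p = n + 2 := Nat.exists_eq_add_of_le' (Fact.out : p.Prime).two_le
  have next_eq_iff (u v : V) : σ u = v ↔ (e v).2 - (e u).2 = 1 ∧ (e u).1 = (e v).1 := by
    rw [← e.apply_eq_iff_eq, he, Prod.ext_iff, and_comm, sub_eq_iff_eq_add', eq_comm (b := (e v).2)]
  refine isHFactor_of_iso_bot_boxProd (Q := Q) cycleGraph_preconnected ⟨e, fun {u v} => ?_⟩
  rw [boxProd_adj, cycleGraph_adj, orbitGraph_adj hfix, next_eq_iff, next_eq_iff,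
    eq_comm (a := (e v).1), bot_adj]
  tauto

end Orbits

section CycleFactorization

variable {V W I J : Type*}

/-- A partition of the edges of `G` into cycle factors indexed by `I`, where factor `i` consists of
cycles whose length divides `k i`. Each factor is encoded by the map `next i` that sends a
vertex to its successor on an oriented copy of its cycle. -/
structure CycleFactorization (G : SimpleGraph V) (k : I → ℕ) where
  /-- The successor of a vertex in each factor. -/
  next : I → V → V
  iterate_next : ∀ i v, (next i)^[k i] v = v
  adj_next : ∀ i v, G.Adj v (next i v)
  existsUnique_next : ∀ u v, G.Adj u v → ∃! i, next i u = v ∨ next i v = u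

namespace CycleFactorization

variable {G H : SimpleGraph V} {k : I → ℕ} {l : J → ℕ}

theorem next_ne (F : CycleFactorization G k) (i : I) (v : V) : F.next i v ≠ v :=
  (F.adj_next i v).ne'

theorem adj_of_next (F : CycleFactorization G k) {i : I} {u v : V}
    (h : F.next i u = v ∨ F.next i v = u) : G.Adj u v := by
  rcases h with rfl | rfl
  exacts [F.adj_next i u, (F.adj_next i v).symm]

/-- Pulling a factorization back along an isomorphism of graphs. -/
def comap {G : SimpleGraph V} {H : SimpleGraph W} (F : CycleFactorization H k) (e : G ≃g H) :
    CycleFactorization G k where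
  next i v := e.symm (F.next i (e v))
  iterate_next i v := by
    have semiconj : Function.Semiconj e.symm (F.next i) (fun v => e.symm (F.next i (e v))) :=
      fun w => by simp
    rw [← e.symm_apply_apply v, ← semiconj.iterate_right (k i) (e v), F.iterate_next]
  adj_next i v := by simpa [← e.map_adj_iff] using F.adj_next i (e v)
  existsUnique_next u v h := by
    simpa [RelIso.symm_apply_eq] using F.existsUnique_next _ _ (e.map_adj_iff.2 h)

/-- Renaming the factors along a bijection. -/
def reindex (F : CycleFactorization G k) (e : J ≃ I) (hkl : ∀ j, k (e j) = l j) :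
    CycleFactorization G l where
  next j := F.next (e j)
  iterate_next j := hkl j ▸ F.iterate_next (e j)
  adj_next j := F.adj_next (e j)
  existsUnique_next u v h := (e.existsUnique_congr_left).2 (by
    simpa using F.existsUnique_next u v h)

/-- Repeating a factorization on each of the copies of `G` indexed by `Q`. -/
def copies (Q : Type*) (F : CycleFactorization G k) :
    CycleFactorization ((⊥ : SimpleGraph Q) □ G) k where
  next i := Prod.map id (F.next i)
  iterate_next i v := by
    rw [Prod.map_iterate]
    exact Prod.ext (by simp) (F.iterate_next i v.2)
  adj_next i v := by simp [F.adj_next]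
  existsUnique_next := by
    rintro ⟨q, u⟩ ⟨q', v⟩ h
    obtain ⟨huv, rfl⟩ : G.Adj u v ∧ q = q' := by simpa using h
    simpa using F.existsUnique_next u v huv

/-- Joining factorizations of two graphs without a common edge. -/
def sum (F : CycleFactorization G k) (F' : CycleFactorization H l) (hGH : Disjoint G H) :
    CycleFactorization (G ⊔ H) (Sum.elim k l) where
  next := Sum.elim F.next F'.next
  iterate_next := Sum.rec F.iterate_next F'.iterate_next
  adj_next := Sum.rec (fun i v => Or.inl (F.adj_next i v)) fun j v => Or.inr (F'.adj_next j v)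
  existsUnique_next u v h := by
    have not_both (hG : G.Adj u v) (hH : H.Adj u v) : False :=
      (disjoint_iff_inf_le.1 hGH : G ⊓ H ≤ ⊥) ⟨hG, hH⟩
    rcases h with h | h
    · obtain ⟨i, hi, hunique⟩ := F.existsUnique_next u v h
      refine ⟨Sum.inl i, hi, ?_⟩
      rintro (i' | j) hj
      exacts [congrArg _ (hunique i' hj), (not_both h (F'.adj_of_next hj)).elim]
    · obtain ⟨j, hj, hunique⟩ := F'.existsUnique_next u v h
      refine ⟨Sum.inr j, hj, ?_⟩
      rintro (i | j') hi
      exacts [(not_both (F.adj_of_next hi) h).elim, congrArg _ (hunique j' hi)]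

/-- Joining factorizations of graphs `H a` that partition the edges of `G`. -/
def sigma {A : Type*} {I : A → Type*} {k : ∀ a, I a → ℕ} {H : A → SimpleGraph V}
    (hle : ∀ a, H a ≤ G) (hunique : ∀ u v, G.Adj u v → ∃! a, (H a).Adj u v)
    (F : ∀ a, CycleFactorization (H a) (k a)) :
    CycleFactorization G (fun i : Σ a, I a => k i.1 i.2) where
  next i := (F i.1).next i.2
  iterate_next i := (F i.1).iterate_next i.2
  adj_next i v := hle i.1 ((F i.1).adj_next i.2 v)
  existsUnique_next u v h := by
    obtain ⟨a, ha, ha'⟩ := hunique u v h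
    obtain ⟨i, hi, hi'⟩ := (F a).existsUnique_next u v ha
    refine ⟨⟨a, i⟩, hi, ?_⟩
    rintro ⟨b, j⟩ hj
    obtain rfl := ha' b ((F b).adj_of_next hj)
    rw [hi' j hj]

theorem isCycleDecomp {m n r s : ℕ} [Fact m.Prime] [Fact n.Prime] [Finite I] [Finite J]
    (F : CycleFactorization G (Sum.elim (fun _ : I => m) (fun _ : J => n)))
    (hI : Nat.card I = r) (hJ : Nat.card J = s) : IsCycleDecomp G m n r s := by
  have F' : CycleFactorization G (Sum.elim (fun _ : Fin r => m) (fun _ : Fin s => n)) :=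
    F.reindex ((Finite.equivFinOfCardEq hI).sumCongr (Finite.equivFinOfCardEq hJ)).symm
      (Sum.rec (fun _ => rfl) fun _ => rfl)
  refine ⟨fun i => orbitGraph (F'.next i), fun i u v huv => ?_, ?_, fun i => ?_, fun j => ?_⟩
  · exact F'.adj_of_next ((orbitGraph_adj (F'.next_ne i)).1 huv)
  · refine Sym2.ind fun u v huv => ?_
    simpa only [mem_edgeSet, orbitGraph_adj (F'.next_ne _)] using F'.existsUnique_next u v huv
  · exact isCycleFactor_orbitGraph (F'.iterate_next (Sum.inl i)) (F'.next_ne _)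
  · exact isCycleFactor_orbitGraph (F'.iterate_next (Sum.inr j)) (F'.next_ne _)

end CycleFactorization

end CycleFactorization

section KirkmanSystem

variable {V I : Type*}

/-- A Kirkman triple system on `V`: a partition of all pairs of points into triangles, resolved
into parallel classes indexed by `I`. -/
abbrev KirkmanSystem (V I : Type*) :=
  CycleFactorization (⊤ : SimpleGraph V) (fun _ : I => 3)

/-- The points of the triangles through `p`, one triangle from each class. -/
def pencil (next : I → V → V) (p : V) : Option (I × Bool) → V
  | none => p
  | some (i, false) => next i p
  | some (i, true) => next i (next i p)

theorem pencil_surjective {next : I → V → V} (iterate_next : ∀ i v, (next i)^[3] v = v) {p : V}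
    (exists_next : ∀ v, p ≠ v → ∃ i, next i p = v ∨ next i v = p) :
    Function.Surjective (pencil next p) := by
  intro v
  by_cases hv : p = v
  · exact ⟨none, hv⟩
  obtain ⟨i, rfl | rfl⟩ := exists_next v hv
  exacts [⟨some (i, false), rfl⟩, ⟨some (i, true), iterate_next i v⟩]

namespace KirkmanSystem

/-- A family of `n` triangle maps on `2 n + 1` points in which every pair of points occurs is a
Kirkman system: by counting, no pair occurs twice. -/
def ofCovering [Finite I] (hcard : Nat.card V = 2 * Nat.card I + 1) (next : I → V → V)
    (iterate_next : ∀ i v, (next i)^[3] v = v) (next_ne : ∀ i v, next i v ≠ v)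
    (exists_next : ∀ u v, u ≠ v → ∃ i, next i u = v ∨ next i v = u) : KirkmanSystem V I where
  next := next
  iterate_next := iterate_next
  adj_next i v := (next_ne i v).symm
  existsUnique_next u v huv := by
    have bijective : Function.Bijective (pencil next u) :=
      (pencil_surjective iterate_next (exists_next u)).bijective_of_nat_card_le
        (by simp [hcard, mul_comm])
    have exists_pencil {i : I} (hi : next i u = v ∨ next i v = u) :
        ∃ b, pencil next u (some (i, b)) = v := by
      rcases hi with hi | rfl
      exacts [⟨false, hi⟩, ⟨true, iterate_next i v⟩]
    refine existsUnique_of_exists_of_unique (exists_next u v huv) fun i j hi hj => ?_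
    obtain ⟨b, hb⟩ := exists_pencil hi
    obtain ⟨c, hc⟩ := exists_pencil hj
    exact congrArg Prod.fst (Option.some_injective _ (bijective.1 (hb.trans hc.symm)))

theorem pencil_bijective (F : KirkmanSystem V I) (p : V) :
    Function.Bijective (pencil F.next p) := by
  have next_next_ne (i : I) : F.next i (F.next i p) ≠ p := fun h =>
    F.next_ne i p (by rw [← congrArg (F.next i) h]; exact F.iterate_next i p)
  have pencil_ne (x : I × Bool) : pencil F.next p (some x) ≠ p := by
    rcases x with ⟨i, _ | _⟩
    exacts [F.next_ne i p, next_next_ne i]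
  have next_pencil (x : I × Bool) : F.next x.1 p = pencil F.next p (some x) ∨
      F.next x.1 (pencil F.next p (some x)) = p := by
    rcases x with ⟨i, _ | _⟩
    exacts [Or.inl rfl, Or.inr (F.iterate_next i p)]
  refine ⟨?_, pencil_surjective F.iterate_next fun v hv => (F.existsUnique_next p v hv).exists⟩
  rintro (_ | x) (_ | y) h
  · rfl
  · exact (pencil_ne y h.symm).elim
  · exact (pencil_ne x h).elim
  · obtain ⟨i, b⟩ := x
    obtain ⟨j, c⟩ := y
    obtain rfl : i = j := (F.existsUnique_next p _ (pencil_ne (i, b)).symm).unique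
      (next_pencil (i, b)) (h ▸ next_pencil (j, c))
    cases b <;> cases c
    exacts [rfl, (F.next_ne i _ h.symm).elim, (F.next_ne i _ h).elim, rfl]

theorem card_eq [Finite V] (F : KirkmanSystem V I) (p : V) : Nat.card V = 2 * Nat.card I + 1 := by
  let e := Equiv.ofBijective _ (F.pencil_bijective p)
  have : Finite I := Finite.of_injective (fun i => e (some (i, false))) fun i j h => by
    simpa using e.injective h
  simp [← Nat.card_congr e, mul_comm]

end KirkmanSystem

/-- There is a Kirkman triple system on `6 t + 3` points. -/
def Kirkman (t : ℕ) : Prop := Nonempty (KirkmanSystem (Fin (6 * t + 3)) (Fin (3 * t + 1)))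

variable {t : ℕ}

theorem KirkmanSystem.kirkman (F : KirkmanSystem V I) (hV : Nat.card V = 6 * t + 3) :
    Kirkman t := by
  have : Finite V := Nat.finite_of_card_ne_zero (by lia)
  obtain ⟨p⟩ : Nonempty V := (Nat.card_pos_iff.1 (by lia)).1
  have hI : Nat.card I = 3 * t + 1 := by have := F.card_eq p; lia
  have : Finite I := Nat.finite_of_card_ne_zero (by lia)
  exact ⟨(F.comap (Iso.completeGraph (Finite.equivFinOfCardEq hV)).symm).reindex
    (Finite.equivFinOfCardEq hI).symm fun _ => rfl⟩

theorem Kirkman.nonempty_system [Finite V] [Finite I] (h : Kirkman t)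
    (hV : Nat.card V = 6 * t + 3) (hI : Nat.card I = 3 * t + 1) : Nonempty (KirkmanSystem V I) :=
  h.map fun F => (F.comap (Iso.completeGraph (Finite.equivFinOfCardEq hV))).reindex
    (Finite.equivFinOfCardEq hI) fun _ => rfl

end KirkmanSystem

section Inflation

variable {V W I : Type*}

/-- The complete multipartite graph with parts `{a} × W`. -/
abbrev multipartite (A W : Type*) : SimpleGraph (A × W) := (⊤ : SimpleGraph A).comap Prod.fst

theorem fst_eq_fst_iff_of_shift {Q : Type*} {σ : V → V} {e : V ≃ Q × ZMod 3}
    (he : ∀ v, e (σ v) = ((e v).1, (e v).2 + 1)) {u v : V} (huv : u ≠ v) :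
    (e u).1 = (e v).1 ↔ σ u = v ∨ σ v = u := by
  have zmod_three : ∀ a b : ZMod 3, a ≠ b → a + 1 = b ∨ b + 1 = a := by decide
  refine ⟨fun h => ?_, ?_⟩
  · have hne : (e u).2 ≠ (e v).2 := fun h' => huv (e.injective (Prod.ext h h'))
    rw [← e.apply_eq_iff_eq, ← e.apply_eq_iff_eq, he, he]
    exact (zmod_three _ _ hne).imp (Prod.ext h) (Prod.ext h.symm)
  · rintro (rfl | rfl) <;> simp [he]

/-- Replace each point of a Kirkman system by a copy of `W`, and each triangle by a factorized
graph on `ZMod 3 × W`: complete multipartite, except for the class `none`, whose triangles also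
absorb the pairs inside the copies of `W`. -/
theorem KirkmanSystem.nonempty_inflate {J : Option I → Type*} {k : ∀ o, J o → ℕ}
    (F : KirkmanSystem V (Option I))
    (complete : CycleFactorization (⊤ : SimpleGraph (ZMod 3 × W)) (k none))
    (partite : ∀ i, CycleFactorization (multipartite (ZMod 3) W) (k (some i))) :
    Nonempty (CycleFactorization (⊤ : SimpleGraph (V × W)) (fun j : Σ o, J o => k j.1 j.2)) := by
  choose Q e he using fun o => exists_equiv_prod_zmod (F.iterate_next o) (F.next_ne o)
  let E (o : Option I) : V × W ≃ Q o × (ZMod 3 × W) :=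
    ((e o).prodCongr (Equiv.refl W)).trans (Equiv.prodAssoc _ _ _)
  let piece : Option I → SimpleGraph (ZMod 3 × W) :=
    fun o => o.elim ⊤ fun _ => multipartite (ZMod 3) W
  let pieceFactorization (o : Option I) : CycleFactorization (piece o) (k o) :=
    Option.rec complete partite o
  let layer (o : Option I) : SimpleGraph (V × W) := ((⊥ : SimpleGraph (Q o)) □ piece o).comap (E o)
  have layer_adj (o : Option I) (x y : V × W) : (layer o).Adj x y ↔
      (piece o).Adj ((e o x.1).2, x.2) ((e o y.1).2, y.2) ∧ (e o x.1).1 = (e o y.1).1 := by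
    simp [layer, E, boxProd_adj]
  refine ⟨CycleFactorization.sigma (H := layer) (fun _ => le_top) ?_ fun o =>
    ((pieceFactorization o).copies (Q o)).comap (Iso.comap (E o) _)⟩
  rintro ⟨u, a⟩ ⟨v, b⟩ huv
  simp only [layer_adj]
  by_cases h : u = v
  · subst h
    exact ⟨none, by simpa [piece] using huv, by rintro (_ | i) <;> simp [piece]⟩
  have piece_adj (o : Option I) (hfst : (e o u).1 = (e o v).1) :
      (piece o).Adj ((e o u).2, a) ((e o v).2, b) := by
    have hsnd : (e o u).2 ≠ (e o v).2 := fun hsnd => h ((e o).injective (Prod.ext hfst hsnd))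
    cases o <;> simp [piece, hsnd]
  have layer_iff (o : Option I) := (and_iff_right_of_imp (piece_adj o)).trans
    (fst_eq_fst_iff_of_shift (he o) h)
  simpa only [layer_iff] using F.existsUnique_next u v h

/-- Every sequence of shifts `d i` that sums to zero around the three parts gives a class of
triangles; the shifts between any two parts run through `W` exactly once. -/
def CycleFactorization.ofShifts [AddCommGroup W] (d : I → ZMod 3 → W)
    (hsum : ∀ i, d i 0 + d i 1 + d i 2 = 0) (hd : ∀ l, Function.Bijective fun i => d i l) :
    CycleFactorization (multipartite (ZMod 3) W) (fun _ : I => 3) where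
  next i v := (v.1 + 1, v.2 + d i v.1)
  iterate_next := by
    rintro i ⟨l, x⟩
    have three : l + 1 + 1 + 1 = l := by decide +revert
    have rotate : d i l + d i (l + 1) + d i (l + 1 + 1) = 0 := by
      have one_add : (1 : ZMod 3) + 1 = 2 ∧ (2 : ZMod 3) + 1 = 0 := by decide
      obtain rfl | rfl | rfl : l = 0 ∨ l = 1 ∨ l = 2 := by decide +revert
      all_goals simp only [zero_add, one_add, ← hsum i]
      all_goals abel
    refine Prod.ext three ?_
    change x + d i l + d i (l + 1) + d i (l + 1 + 1) = x
    rw [add_assoc, add_assoc, ← add_assoc (d i l), rotate, add_zero]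
  adj_next i v := by simp
  existsUnique_next := by
    have zmod_three : ∀ l m : ZMod 3, l ≠ m →
        l + 1 = m ∧ m + 1 ≠ l ∨ m + 1 = l ∧ l + 1 ≠ m := by decide
    have existsUnique_shift (l : ZMod 3) (x y : W) : ∃! i, x + d i l = y := by
      simpa only [eq_sub_iff_add_eq'] using (hd l).existsUnique (y - x)
    rintro ⟨l, x⟩ ⟨m, y⟩ hlm
    rcases zmod_three l m hlm with ⟨h, h'⟩ | ⟨h, h'⟩
    · simpa [h, h'] using existsUnique_shift l x y
    · simpa [h, h'] using existsUnique_shift m y x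

/-- The factorization with the shifts `c`, `c` and `-2 c`. -/
def CycleFactorization.tripartite {n : ℕ} (hn : Odd n) :
    CycleFactorization (multipartite (ZMod 3) (ZMod n)) (fun _ : ZMod n => 3) :=
  have isUnit_neg_two : IsUnit (-2 : ZMod n) :=
    IsUnit.neg ((ZMod.isUnit_iff_coprime 2 n).2 (Nat.coprime_two_left.2 hn))
  ofShifts (fun c l => if l = 2 then -2 * c else c)
    (fun c => by
      rw [if_neg (by decide), if_neg (by decide), if_pos rfl]
      ring)
    (fun l => by
      split_ifs
      exacts [IsUnit.isUnit_iff_mulLeft_bijective.1 isUnit_neg_two, Function.bijective_id])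

theorem Kirkman.two_mul_mul_add_add {s t : ℕ} (hs : Kirkman s) (ht : Kirkman t) :
    Kirkman (2 * s * t + s + t) := by
  obtain ⟨F⟩ := hs.nonempty_system (V := Fin (6 * s + 3)) (I := Option (Fin (3 * s))) (by simp)
    (by simp)
  obtain ⟨complete⟩ := ht.nonempty_system (V := ZMod 3 × ZMod (2 * t + 1)) (I := Fin (3 * t + 1))
    (by rw [Nat.card_prod, Nat.card_zmod, Nat.card_zmod]; ring) (by simp)
  obtain ⟨F'⟩ := F.nonempty_inflate
    (J := fun o => o.elim (Fin (3 * t + 1)) fun _ => ZMod (2 * t + 1)) (k := fun _ _ => 3)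
    complete fun _ => CycleFactorization.tripartite (odd_two_mul_add_one t)
  exact KirkmanSystem.kirkman F' (by rw [Nat.card_prod, Nat.card_fin, Nat.card_zmod]; ring)

end Inflation

section PairwiseBalancedDesign

variable {V X K : Type*}

/-- The blocks `B k` form a pairwise balanced design: every two points lie in exactly one block. -/
def IsPBD (B : K → Set X) : Prop := ∀ x y, x ≠ y → ∃! k, x ∈ B k ∧ y ∈ B k

namespace KirkmanSystem

/-- The points other than `none` are named after the triangles through `none`: the class `x`
contains the triangle `none`, `(x, false)`, `(x, true)`. -/
def IsNormal (F : KirkmanSystem (Option (X × Bool)) X) : Prop :=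
  ∀ x, F.next x none = some (x, false) ∧ F.next x (some (x, false)) = some (x, true)

theorem IsNormal.next_true {F : KirkmanSystem (Option (X × Bool)) X} (hF : F.IsNormal) (x : X) :
    F.next x (some (x, true)) = none := by
  rw [← (hF x).2, ← (hF x).1]
  exact F.iterate_next x none

theorem exists_isNormal (F : KirkmanSystem V X) (p : V) :
    ∃ F' : KirkmanSystem (Option (X × Bool)) X, F'.IsNormal := by
  let e := Equiv.ofBijective _ (F.pencil_bijective p)
  refine ⟨F.comap (Iso.completeGraph e), fun x => ⟨?_, ?_⟩⟩
  · exact e.symm_apply_apply (some (x, false))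
  · exact e.symm_apply_apply (some (x, true))

end KirkmanSystem

namespace IsPBD

variable {B : K → Set X}

/-- The inclusion of the points of the system attached to a block. -/
def blockInclusion (B : K → Set X) (k : K) : Option (B k × Bool) → Option (X × Bool) :=
  Option.map (Prod.map Subtype.val id)

theorem blockInclusion_injective (k : K) : Function.Injective (blockInclusion B k) :=
  Option.map_injective (Subtype.val_injective.prodMap Function.injective_id)

open scoped Classical in
/-- The class `x` of the system on `Option (X × Bool)` obtained by gluing, along the triangle of
`x`, the classes `x` of the systems attached to the blocks through `x`. -/
noncomputable def glue (hB : IsPBD B) (F : ∀ k, KirkmanSystem (Option (B k × Bool)) (B k)) (x : X) :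
    Option (X × Bool) → Option (X × Bool)
  | none => some (x, false)
  | some (y, b) =>
    if hxy : x = y then bif b then none else some (x, true)
    else
      have h := (hB x y hxy).choose_spec.1
      blockInclusion B _ ((F _).next ⟨x, h.1⟩ (some (⟨y, h.2⟩, b)))

variable {hB : IsPBD B} {F : ∀ k, KirkmanSystem (Option (B k × Bool)) (B k)}

theorem glue_blockInclusion (hF : ∀ k, (F k).IsNormal) {k : K} (x : B k)
    (w : Option (B k × Bool)) :
    glue hB F x (blockInclusion B k w) = blockInclusion B k ((F k).next x w) := by
  obtain ⟨x, hx⟩ := x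
  rcases w with _ | ⟨⟨y, hy⟩, b⟩
  · simp [(hF k _).1, glue, blockInclusion]
  by_cases hxy : x = y
  · subst hxy
    cases b <;> simp [glue, blockInclusion, (hF k _).2, (hF k).next_true]
  · have block_eq : (hB x y hxy).choose = k :=
      (hB x y hxy).unique (hB x y hxy).choose_spec.1 ⟨hx, hy⟩
    simp only [glue, blockInclusion, Option.map_some, Prod.map_apply, id, dif_neg hxy]
    subst block_eq
    rfl

theorem iterate_glue (hF : ∀ k, (F k).IsNormal) (x : X) (v : Option (X × Bool)) :
    (glue hB F x)^[3] v = v := by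
  rcases v with _ | ⟨y, b⟩
  · simp [glue]
  by_cases hxy : x = y
  · subst hxy
    cases b <;> simp [glue]
  obtain ⟨k, hk⟩ := (hB x y hxy).exists
  have semiconj : Function.Semiconj (blockInclusion B k) ((F k).next ⟨x, hk.1⟩) (glue hB F x) :=
    fun w => (glue_blockInclusion hF _ w).symm
  exact (semiconj.iterate_right 3 (some (⟨y, hk.2⟩, b))).symm.trans
    (congrArg _ ((F k).iterate_next _ _))

theorem glue_ne (hF : ∀ k, (F k).IsNormal) (x : X) (v : Option (X × Bool)) :
    glue hB F x v ≠ v := by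
  rcases v with _ | ⟨y, b⟩
  · simp [glue]
  by_cases hxy : x = y
  · subst hxy
    cases b <;> simp [glue]
  obtain ⟨k, hk⟩ := (hB x y hxy).exists
  have inclusion_ne := (blockInclusion_injective k).ne
    ((F k).next_ne ⟨x, hk.1⟩ (some (⟨y, hk.2⟩, b)))
  rwa [← glue_blockInclusion hF] at inclusion_ne

theorem exists_glue_eq (hF : ∀ k, (F k).IsNormal) (u v : Option (X × Bool)) (huv : u ≠ v) :
    ∃ x, glue hB F x u = v ∨ glue hB F x v = u := by
  rcases u with _ | ⟨y, b⟩ <;> rcases v with _ | ⟨z, c⟩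
  · exact (huv rfl).elim
  · exact ⟨z, by cases c <;> simp [glue]⟩
  · exact ⟨y, by cases b <;> simp [glue]⟩
  by_cases hyz : y = z
  · subst hyz
    exact ⟨y, by cases b <;> cases c <;> simp_all [glue]⟩
  obtain ⟨k, hk⟩ := (hB y z hyz).exists
  obtain ⟨x, hx, -⟩ := (F k).existsUnique_next (some (⟨y, hk.1⟩, b)) (some (⟨z, hk.2⟩, c))
    (by simp [hyz])
  refine ⟨x, hx.imp (fun h => ?_) fun h => ?_⟩
  all_goals
    have := congrArg (blockInclusion B k) h
    rwa [← glue_blockInclusion hF] at this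

theorem kirkman [Finite X] {t : ℕ} (hB : IsPBD B)
    (hblock : ∀ k, ∃ s, Kirkman s ∧ (B k).ncard = 3 * s + 1) (hX : Nat.card X = 3 * t + 1) :
    Kirkman t := by
  have exists_normal (k : K) : ∃ F : KirkmanSystem (Option (B k × Bool)) (B k), F.IsNormal := by
    obtain ⟨s, hs, hcard⟩ := hblock k
    obtain ⟨F⟩ := hs.nonempty_system (V := Fin (6 * s + 3)) (by simp) hcard
    exact F.exists_isNormal 0
  choose F hF using exists_normal
  exact (KirkmanSystem.ofCovering (by simp [mul_comm]) (glue hB F) (iterate_glue hF) (glue_ne hF)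
    (exists_glue_eq hF)).kirkman (by
      rw [Finite.card_option, Nat.card_prod, hX, Nat.card_eq_fintype_card (α := Bool),
        Fintype.card_bool]
      ring)

end IsPBD

end PairwiseBalancedDesign

section GroupDivisibleDesign

theorem kirkman_zero : Kirkman 0 :=
  KirkmanSystem.kirkman (V := ZMod 3) (KirkmanSystem.ofCovering (I := Unit) (by simp)
    (fun _ v => v + 1) (by decide) (by decide) (by decide)) (by simp)

theorem kirkman_one : Kirkman 1 :=
  let direction : Fin 4 → ZMod 3 × ZMod 3 := ![(1, 0), (0, 1), (1, 1), (1, 2)]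
  KirkmanSystem.kirkman (KirkmanSystem.ofCovering (by simp) (fun i v => v + direction i)
    (by decide +kernel) (by decide +kernel) (by decide +kernel)) (by simp)

variable {X Y K : Type*}

/-- The blocks `B k` form a group divisible design whose groups are the fibres of `g`: a block
meets each group at most once, and two points of different groups lie in exactly one block. -/
structure IsGDD (g : X → Y) (B : K → Set X) : Prop where
  injOn : ∀ k, Set.InjOn g (B k)
  existsUnique_block : ∀ x y, g x ≠ g y → ∃! k, x ∈ B k ∧ y ∈ B k

namespace IsGDD

theorem isPBD_option {g : X → Y} {B : K → Set X} (hB : IsGDD g B) :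
    IsPBD (Sum.elim (fun y => insert none (some '' (g ⁻¹' {y}))) fun k => some '' B k) := by
  rintro (_ | x) (_ | y) hxy
  · exact (hxy rfl).elim
  · exact ⟨Sum.inl (g y), by simp, by rintro (z | k) <;> simp +contextual [eq_comm]⟩
  · exact ⟨Sum.inl (g x), by simp, by rintro (z | k) <;> simp +contextual [eq_comm]⟩
  have hne : x ≠ y := fun h => hxy (congrArg some h)
  by_cases hg : g x = g y
  · refine ⟨Sum.inl (g x), by simp [hg], ?_⟩
    rintro (z | k) h
    · simp_all
    · simp only [Sum.elim_inr, Set.mem_image, Option.some.injEq, exists_eq_right] at h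
      exact (hne (hB.injOn k h.1 h.2 hg)).elim
  · obtain ⟨k, hk, hunique⟩ := hB.existsUnique_block x y hg
    refine ⟨Sum.inr k, by simpa using hk, ?_⟩
    rintro (z | k') h
    · simp_all
    · exact congrArg _ (hunique k' (by simpa using h))

theorem weight {W : Type*} {g : X → Y} {B : K → Set X} (hB : IsGDD g B) {L : K → Type*}
    {C : ∀ k, L k → Set (B k × W)} (hC : ∀ k, IsGDD Prod.fst (C k)) :
    IsGDD (g ∘ Prod.fst) fun l : Σ k, L k => Prod.map Subtype.val id '' C l.1 l.2 := by
  constructor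
  · rintro ⟨k, l⟩ _ ⟨⟨x, a⟩, hx, rfl⟩ _ ⟨⟨y, b⟩, hy, rfl⟩ h
    obtain rfl : x = y := Subtype.ext (hB.injOn k x.2 y.2 h)
    rw [(hC k).injOn l hx hy rfl]
  · rintro ⟨x, a⟩ ⟨y, b⟩ hg
    obtain ⟨k, ⟨hx, hy⟩, hk⟩ := hB.existsUnique_block x y hg
    obtain ⟨l, hl, hl'⟩ := (hC k).existsUnique_block (⟨x, hx⟩, a) (⟨y, hy⟩, b)
      fun h => hg (congrArg (fun z : B k => g z) h)
    refine ⟨⟨k, l⟩, ⟨⟨_, hl.1, rfl⟩, ⟨_, hl.2, rfl⟩⟩, ?_⟩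
    rintro ⟨k', l'⟩ ⟨⟨⟨x', a'⟩, hx', hxx'⟩, ⟨⟨y', b'⟩, hy', hyy'⟩⟩
    obtain ⟨rfl, rfl⟩ : x' = x ∧ a' = a := by simpa using hxx'
    obtain ⟨rfl, rfl⟩ : y' = y ∧ b' = b := by simpa using hyy'
    obtain rfl := hk k' ⟨x'.2, y'.2⟩
    rw [hl' l' ⟨hx', hy'⟩]

theorem comap_fst {D E W : Type*} {C : K → Set (E × W)} (hC : IsGDD Prod.fst C) (e : D ≃ E) :
    IsGDD Prod.fst fun k => Prod.map e id ⁻¹' C k where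
  injOn := by
    rintro k x hx y hy h
    have := hC.injOn k hx hy (congrArg e h)
    exact (e.injective.prodMap Function.injective_id) this
  existsUnique_block x y h := hC.existsUnique_block _ _ (e.injective.ne h)

end IsGDD

/-- The blocks of a `4`-GDD of type `3⁴`: the affine lines of `ZMod 3 × ZMod 3`, one coordinate for
each of the four directions. -/
def fourGroupsBlock (c : ZMod 3 × ZMod 3) : Finset (Fin 4 × ZMod 3) :=
  {(0, c.1), (1, c.2), (2, c.1 + c.2), (3, c.1 + 2 * c.2)}

/-- The blocks of a `4`-GDD of type `3⁵`: the translates of a relative difference set. -/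
def fiveGroupsBlock (c : ZMod 5 × ZMod 3) : Finset (ZMod 5 × ZMod 3) :=
  {c, c + (1, 1), c + (2, 1), c + (3, 0)}

theorem isGDD_fourGroupsBlock :
    IsGDD Prod.fst fun c => (fourGroupsBlock c : Set (Fin 4 × ZMod 3)) where
  injOn := by
    simp only [Set.InjOn, Finset.mem_coe]
    decide +kernel
  existsUnique_block := by
    simp only [Finset.mem_coe, ExistsUnique]
    decide +kernel

theorem isGDD_fiveGroupsBlock :
    IsGDD Prod.fst fun c => (fiveGroupsBlock c : Set (ZMod 5 × ZMod 3)) where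
  injOn := by
    simp only [Set.InjOn, Finset.mem_coe]
    decide +kernel
  existsUnique_block := by
    simp only [Finset.mem_coe, ExistsUnique]
    decide +kernel

theorem exists_isGDD_fst {D : Type*} (hD : Nat.card D = 4 ∨ Nat.card D = 5) :
    ∃ (L : Type) (C : L → Set (D × ZMod 3)), IsGDD Prod.fst C ∧ ∀ l, (C l).ncard = 4 := by
  have : Finite D := Nat.finite_of_card_ne_zero (by lia)
  have ncard_preimage {E : Type} (e : D ≃ E) (C : Finset (E × ZMod 3)) :
      (Prod.map e (id : ZMod 3 → ZMod 3) ⁻¹' (C : Set (E × ZMod 3))).ncard = C.card := by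
    have := Set.ncard_preimage_of_injective_subset_range
      (e.injective.prodMap (Function.injective_id (α := ZMod 3))) (s := (C : Set (E × ZMod 3)))
      (by simp [e.surjective.range_eq, Set.range_prodMap])
    simpa using this
  rcases hD with hD | hD
  · let e : D ≃ Fin 4 := Finite.equivFinOfCardEq hD
    exact ⟨_, _, isGDD_fourGroupsBlock.comap_fst e, fun c => by
      rw [ncard_preimage]; decide +kernel +revert⟩
  · let e : D ≃ ZMod 5 := Finite.equivFinOfCardEq hD
    exact ⟨_, _, isGDD_fiveGroupsBlock.comap_fst e, fun c => by
      rw [ncard_preimage]; decide +kernel +revert⟩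

theorem IsGDD.kirkman [Finite X] {g : X → Y} {B : K → Set X} (hB : IsGDD g B)
    (hblock : ∀ k, (B k).ncard = 4 ∨ (B k).ncard = 5)
    (hgroup : ∀ y, Kirkman (g ⁻¹' {y}).ncard) : Kirkman (Nat.card X) := by
  choose L C hC hcard using fun k => exists_isGDD_fst (hblock k)
  refine (hB.weight hC).isPBD_option.kirkman ?_ (by simp [mul_comm])
  rintro (y | ⟨k, l⟩)
  · refine ⟨_, hgroup y, ?_⟩
    have : (g ∘ Prod.fst) ⁻¹' {y} = (g ⁻¹' {y}) ×ˢ (Set.univ : Set (ZMod 3)) := by ext; simp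
    rw [Sum.elim_inl, Set.ncard_insert_of_notMem (by simp),
      Set.ncard_image_of_injective _ (Option.some_injective _), this, Set.ncard_prod]
    simp [Set.ncard_univ, mul_comm]
  · refine ⟨1, kirkman_one, ?_⟩
    rw [Sum.elim_inr, Set.ncard_image_of_injective _ (Option.some_injective _),
      Set.ncard_image_of_injective _ (Subtype.val_injective.prodMap Function.injective_id), hcard]

end GroupDivisibleDesign

section TransversalDesign

variable {R : Type*}

/-- Five copies of `R`, the last of which is truncated to `S`. -/
abbrev TruncatedPoint (S : Set R) : Type _ := {p : Fin 5 × R // p.1 = 4 → p.2 ∈ S}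

theorem ncard_truncatedPoint_group (S : Set R) (i : Fin 5) :
    ((fun p : TruncatedPoint S => p.1.1) ⁻¹' {i}).ncard = {x | i = 4 → x ∈ S}.ncard := by
  refine Set.ncard_congr (fun p _ => p.1.2) ?_ ?_ ?_
  · rintro ⟨⟨j, x⟩, hx⟩ rfl
    exact hx
  · rintro ⟨⟨j, x⟩, hx⟩ ⟨⟨k, y⟩, hy⟩ rfl (rfl : k = j) (rfl : x = y)
    rfl
  · exact fun x hx => ⟨⟨(i, x), hx⟩, rfl, rfl⟩

theorem card_truncatedPoint [Finite R] (S : Set R) :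
    Nat.card (TruncatedPoint S) = 4 * Nat.card R + S.ncard := by
  rw [Nat.card_congr (Equiv.subtypeProdEquivSigmaSubtype fun i x => i = 4 → x ∈ S), Nat.card_sigma,
    Fin.sum_univ_five]
  simp only [Fin.reduceEq, IsEmpty.forall_iff, Nat.card_subtype_true, forall_const,
    Nat.card_coe_set_eq]
  ring

variable [CommRing R]

/-- The graph of `i ↦ c.1 + e i * c.2`, as a block of the transversal design over `R`. -/
def transversal (e : Fin 5 → R) (S : Set R) (c : R × R) : Set (TruncatedPoint S) :=
  {p | p.1.2 = c.1 + e p.1.1 * c.2}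

variable {e : Fin 5 → R} {S : Set R}

theorem injOn_transversal (c : R × R) :
    Set.InjOn (fun p : TruncatedPoint S => p.1.1) (transversal e S c) := by
  rintro ⟨⟨i, x⟩, hx⟩ (hxc : x = c.1 + e i * c.2) ⟨⟨j, y⟩, hy⟩ (hyc : y = c.1 + e j * c.2) rfl
  subst hxc hyc
  rfl

theorem isGDD_transversal (he : ∀ i j, i ≠ j → IsUnit (e i - e j)) :
    IsGDD (fun p : TruncatedPoint S => p.1.1) (transversal e S) where
  injOn := injOn_transversal
  existsUnique_block := by
    rintro ⟨⟨i, x⟩, hx⟩ ⟨⟨j, y⟩, hy⟩ hij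
    obtain ⟨u, hu⟩ := he i j hij
    have slope_eq : (e i - e j) * (↑u⁻¹ * (x - y)) = x - y := by rw [← hu, u.mul_inv_cancel_left]
    refine ⟨(x - e i * (↑u⁻¹ * (x - y)), ↑u⁻¹ * (x - y)), ⟨?_, ?_⟩, ?_⟩
    · simp [transversal]
    · change y = _
      linear_combination slope_eq
    · rintro ⟨a, b⟩ ⟨rfl : x = a + e i * b, rfl : y = a + e j * b⟩
      have slope : ↑u⁻¹ * (a + e i * b - (a + e j * b)) = b := by
        rw [add_sub_add_left_eq_sub, ← sub_mul, ← hu, u.inv_mul_cancel_left]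
      rw [slope, add_sub_cancel_right]

theorem ncard_transversal (c : R × R) :
    (transversal e S c).ncard = 4 ∨ (transversal e S c).ncard = 5 := by
  have image_eq : (fun p : TruncatedPoint S => p.1.1) '' transversal e S c =
      {i | i = 4 → c.1 + e i * c.2 ∈ S} := by
    ext i
    constructor
    · rintro ⟨⟨⟨i, x⟩, hx⟩, (hxc : x = c.1 + e i * c.2), rfl⟩
      exact hxc ▸ hx
    · exact fun hi => ⟨⟨(i, c.1 + e i * c.2), hi⟩, rfl, rfl⟩
  rw [← (injOn_transversal c).ncard_image, image_eq]
  by_cases hS : c.1 + e 4 * c.2 ∈ S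
  · right
    rw [show {i : Fin 5 | i = 4 → c.1 + e i * c.2 ∈ S} = Set.univ by ext; grind]
    simp [Set.ncard_univ]
  · left
    rw [show {i : Fin 5 | i = 4 → c.1 + e i * c.2 ∈ S} = {4}ᶜ by ext; grind]
    simp [Set.ncard_eq_toFinset_card', Finset.card_compl]

theorem Kirkman.four_mul_card_add [Finite R] (he : ∀ i j, i ≠ j → IsUnit (e i - e j))
    (hR : Kirkman (Nat.card R)) {m : ℕ} (hm : Kirkman m) (hle : m ≤ Nat.card R) :
    Kirkman (4 * Nat.card R + m) := by
  obtain ⟨S, -, rfl⟩ := Set.exists_subset_card_eq (s := (Set.univ : Set R)) (n := m)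
    (by rwa [Set.ncard_univ])
  rw [← card_truncatedPoint]
  refine (isGDD_transversal he).kirkman ncard_transversal fun i => ?_
  rw [ncard_truncatedPoint_group]
  by_cases hi : i = 4
  · simpa [hi] using hm
  · simpa [hi, Set.ncard_univ] using hR

theorem Kirkman.four_mul_add {n m : ℕ} (hn : n.Coprime 6) (hn' : Kirkman n) (hm : Kirkman m)
    (hle : m ≤ n) : Kirkman (4 * n + m) := by
  have : NeZero n := ⟨by rintro rfl; simp at hn⟩
  have isUnit_sub (i j : Fin 5) (hij : j < i) : IsUnit ((i.val : ZMod n) - j.val) := by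
    rw [← Nat.cast_sub hij.le, ZMod.isUnit_iff_coprime]
    have dvd : i.val - j.val ∣ 6 ^ 2 := by decide +revert
    exact (hn.symm.pow_left 2).coprime_dvd_left dvd
  have h := Kirkman.four_mul_card_add (R := ZMod n) (e := fun i => (i.val : ZMod n)) (m := m)
    (fun i j hij => ?_) (by simpa) hm (by simpa)
  · simpa using h
  rcases hij.lt_or_gt with hij | hij
  · rw [← neg_sub]
    exact (isUnit_sub j i hij).neg
  · exact isUnit_sub i j hij

theorem Kirkman.thirty_six_add {m : ℕ} (hnine : Kirkman 9) (hm : Kirkman m) (hle : m ≤ 9) :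
    Kirkman (36 + m) := by
  have card_eq : Nat.card (GaloisField 3 2) = 9 := GaloisField.card 3 2 two_ne_zero
  have : Finite (GaloisField 3 2) := Nat.finite_of_card_ne_zero (by lia)
  let e : Fin 5 → GaloisField 3 2 := (Finite.equivFinOfCardEq card_eq).symm ∘ Fin.castLE (by simp)
  have e_injective : Function.Injective e :=
    (Equiv.injective _).comp (Fin.castLE_injective _)
  have h := Kirkman.four_mul_card_add (e := e)
    (fun i j hij => (sub_ne_zero.2 (e_injective.ne hij)).isUnit) (card_eq ▸ hnine) hm (by lia)
  rwa [card_eq] at h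

end TransversalDesign

section ThirtyFourPoints

/-- Seven of the thirteen directions of the affine space over `ZMod 3`; the other six are those of
the edges of the tetrahedron `0, (1, 0, 0), (0, 1, 0), (0, 0, 1)`. -/
def direction : Fin 7 → ZMod 3 × ZMod 3 × ZMod 3 :=
  ![(1, 1, 0), (1, 0, 1), (1, 1, 1), (1, 1, 2), (1, 2, 1), (1, 2, 2), (0, 1, 1)]

/-- A point on each line with direction `direction j`. -/
def basePoint (j : Fin 7) (c : ZMod 3 × ZMod 3) : ZMod 3 × ZMod 3 × ZMod 3 :=
  if j = 6 then (c.1, c.2, 0) else (0, c.1, c.2)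

/-- The blocks of a pairwise balanced design on the points of the affine space of order three and
seven of its directions: the translates of the tetrahedron, the lines in the seven directions, each
extended by its direction, and the set of these directions. -/
def thirtyFourBlock : (ZMod 3 × ZMod 3 × ZMod 3) ⊕ (Fin 7 × ZMod 3 × ZMod 3) ⊕ Unit →
    Finset ((ZMod 3 × ZMod 3 × ZMod 3) ⊕ Fin 7)
  | .inl c => {.inl c, .inl (c + (1, 0, 0)), .inl (c + (0, 1, 0)), .inl (c + (0, 0, 1))}
  | .inr (.inl (j, c)) =>
    {.inr j, .inl (basePoint j c), .inl (basePoint j c + direction j),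
      .inl (basePoint j c + 2 • direction j)}
  | .inr (.inr _) => Finset.univ.image .inr

set_option synthInstance.maxSize 512 in
theorem isPBD_thirtyFourBlock :
    IsPBD fun k => (thirtyFourBlock k : Set ((ZMod 3 × ZMod 3 × ZMod 3) ⊕ Fin 7)) := by
  simp only [IsPBD, Finset.mem_coe, ExistsUnique]
  decide +kernel

theorem card_thirtyFourBlock :
    ∀ k, (thirtyFourBlock k).card = 4 ∨ (thirtyFourBlock k).card = 7 := by
  decide +kernel

theorem Kirkman.eleven (htwo : Kirkman 2) : Kirkman 11 := by
  refine isPBD_thirtyFourBlock.kirkman (fun k => ?_) (by simp)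
  rw [Set.ncard_coe_finset]
  rcases card_thirtyFourBlock k with h | h
  exacts [⟨1, kirkman_one, h⟩, ⟨2, htwo, h⟩]

end ThirtyFourPoints

section FieldSystems

variable {F : Type*} [Field F] {ζ x : F} {H : Set F}

/-- `H` represents the nonzero elements of `F` up to sign and is stable under multiplication by the
primitive cube root of unity `ζ`. -/
structure IsHalfSystem (ζ : F) (H : Set F) : Prop where
  isPrimitiveRoot : IsPrimitiveRoot ζ 3
  zero_notMem : 0 ∉ H
  neg_mem_iff : ∀ {x}, x ≠ 0 → (-x ∈ H ↔ x ∉ H)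
  mul_mem_iff : ∀ {x}, ζ * x ∈ H ↔ x ∈ H

theorem exists_isHalfSystem [Finite F] {j : ℕ} (hF : Nat.card F = 6 * j + 1) :
    ∃ (ζ : F) (H : Set F), IsHalfSystem ζ H := by
  have hdvd : 3 ∣ Nat.card Fˣ := ⟨2 * j, by rw [Nat.card_units, hF]; lia⟩
  obtain ⟨ζ, hζ⟩ := exists_prime_orderOf_dvd_card' 3 hdvd
  have hζ : IsPrimitiveRoot (ζ : F) 3 :=
    IsPrimitiveRoot.coe_units_iff.2 (hζ ▸ IsPrimitiveRoot.orderOf ζ)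
  have hchar : ringChar F ≠ 2 := by
    have := Fintype.ofFinite F
    rw [Ne, FiniteField.even_card_iff_char_two, ← Nat.card_eq_fintype_card, hF]
    lia
  obtain ⟨f, hf⟩ := exists_injective_nat F
  refine ⟨ζ, {x | f (x ^ 3) < f (-x ^ 3)}, hζ, by simp, fun {x} hx => ?_, fun {x} => ?_⟩
  · have hne : f (-x ^ 3) ≠ f (x ^ 3) := fun h =>
      pow_ne_zero 3 hx ((Ring.eq_self_iff_eq_zero_of_char_ne_two hchar).1 (hf h))
    simp only [Set.mem_ofPred_eq, Odd.neg_pow (by decide : Odd 3), neg_neg]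
    lia
  · simp [mul_pow, hζ.pow_eq_one]

namespace IsHalfSystem

theorem sub_one_ne_zero (h : IsHalfSystem ζ H) : ζ - 1 ≠ 0 :=
  sub_ne_zero.2 (h.isPrimitiveRoot.ne_one (by norm_num))

theorem sq_eq (h : IsHalfSystem ζ H) : ζ ^ 2 = -ζ - 1 := by
  have geom := h.isPrimitiveRoot.geom_sum_eq_zero (by norm_num)
  simp only [Finset.sum_range_succ, Finset.sum_range_zero] at geom
  linear_combination geom

theorem pow_mul_mem_iff (h : IsHalfSystem ζ H) (n : ℕ) : ζ ^ n * x ∈ H ↔ x ∈ H := by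
  induction n with
  | zero => simp
  | succ n ih => rw [pow_succ', mul_assoc, h.mul_mem_iff, ih]

theorem pow_val_add_one (h : IsHalfSystem ζ H) (l : ZMod 3) :
    ζ ^ (l + 1).val = ζ * ζ ^ l.val := by
  rw [ZMod.val_add, ← pow_eq_pow_mod _ h.isPrimitiveRoot.pow_eq_one, pow_add,
    ZMod.val_one'' (by simp), pow_one, mul_comm]

theorem ne_zero (h : IsHalfSystem ζ H) : ζ ≠ 0 :=
  h.isPrimitiveRoot.ne_zero three_ne_zero

theorem neg_mul_mem_iff (h : IsHalfSystem ζ H) (hx : x ≠ 0) : -(ζ * x) ∈ H ↔ x ∉ H := by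
  rw [h.neg_mem_iff (mul_ne_zero h.ne_zero hx), h.mul_mem_iff]

theorem two_ne_zero (h : IsHalfSystem ζ H) : (2 : F) ≠ 0 := by
  intro htwo
  have : (-1 : F) = 1 := by linear_combination -htwo
  simpa [this] using h.neg_mem_iff (one_ne_zero (α := F))

theorem card_eq [Finite F] (h : IsHalfSystem ζ H) : Nat.card F = 2 * H.ncard + 1 := by
  have hcompl : Hᶜ = insert 0 (Neg.neg '' H) := by
    ext x
    rcases eq_or_ne x 0 with rfl | hx
    · simp [h.zero_notMem]
    · simp [hx, h.neg_mem_iff hx]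
  have hzero : (0 : F) ∉ Neg.neg '' H := by simpa using h.zero_notMem
  rw [← Set.ncard_add_ncard_compl H, hcompl, Set.ncard_insert_of_notMem hzero,
    Set.ncard_image_of_injective H neg_injective]
  lia

end IsHalfSystem

/-- The parallel classes on three copies of `F`: the translates of a base class, whose triangles are
the orbits `{z, ζ z, ζ ^ 2 z}` inside a copy for `z ∈ H` and transverse for `z ∉ H`, and for
each `z ∈ H` the transverse translates of `0, ζ z, ζ ^ 2 z`. -/
noncomputable def threeCopiesNext (ζ : F) (H : Set F) : F ⊕ H → F × ZMod 3 → F × ZMod 3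
  | .inl k, (x, l) => (k + ζ * (x - k), l + Hᶜ.indicator 1 (x - k))
  | .inr z, (x, l) => (x + ζ ^ l.val * (ζ - 1) * z, l + 1)

theorem IsHalfSystem.iterate_threeCopiesNext (h : IsHalfSystem ζ H) (i : F ⊕ H) (v : F × ZMod 3) :
    (threeCopiesNext ζ H i)^[3] v = v := by
  have hthree (l m : ZMod 3) : l + m + m + m = l := by decide +revert
  obtain ⟨x, l⟩ := v
  rcases i with k | z
  · have hζ : k + ζ * (ζ * (ζ * (x - k))) = x := by
      linear_combination (x - k) * h.isPrimitiveRoot.pow_eq_one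
    have hind (z : F) : Hᶜ.indicator (1 : F → ZMod 3) (ζ * z) = Hᶜ.indicator 1 z := by
      by_cases hz : z ∈ H <;> simp [hz, h.mul_mem_iff]
    simp [threeCopiesNext, hind, hζ, hthree]
  · simp only [threeCopiesNext, Function.iterate_succ, Function.iterate_zero, Function.comp_apply,
      id_eq, Prod.mk.injEq, h.pow_val_add_one, hthree, and_true]
    linear_combination ζ ^ l.val * (ζ - 1) * z * h.sq_eq

theorem IsHalfSystem.threeCopiesNext_ne (h : IsHalfSystem ζ H) (i : F ⊕ H) (v : F × ZMod 3) :
    threeCopiesNext ζ H i v ≠ v := by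
  obtain ⟨x, l⟩ := v
  rcases i with k | z
  · simp only [threeCopiesNext, Ne, Prod.mk.injEq, not_and]
    intro hx
    have : (ζ - 1) * (x - k) = 0 := by linear_combination hx
    obtain hk := (mul_eq_zero.1 this).resolve_left h.sub_one_ne_zero
    simp [hk, h.zero_notMem]
  · simp [threeCopiesNext]

theorem IsHalfSystem.exists_sub_one_mul_eq (h : IsHalfSystem ζ H) (x : F) :
    ∃ z, (ζ - 1) * z = x :=
  ⟨_, mul_div_cancel₀ _ h.sub_one_ne_zero⟩

theorem IsHalfSystem.exists_threeCopiesNext_add_one (h : IsHalfSystem ζ H) (x y : F)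
    (l : ZMod 3) : ∃ i, threeCopiesNext ζ H i (x, l) = (y, l + 1) := by
  obtain ⟨z, hz⟩ := h.exists_sub_one_mul_eq (y - x)
  have hζ : ζ ^ l.val ≠ 0 := pow_ne_zero _ h.ne_zero
  by_cases hzH : z ∈ H
  · refine ⟨.inr ⟨(ζ ^ l.val)⁻¹ * z, ?_⟩, ?_⟩
    · rwa [← h.pow_mul_mem_iff l.val, mul_inv_cancel_left₀ hζ]
    · simp only [threeCopiesNext, Prod.mk.injEq, and_true]
      field_simp
      linear_combination hz
  · refine ⟨.inl (x - z), ?_⟩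
    simp only [threeCopiesNext, sub_sub_cancel, hzH, Set.mem_compl_iff, not_false_eq_true,
      Set.indicator_of_mem, Pi.one_apply, Prod.mk.injEq, and_true]
    linear_combination hz

theorem threeCopiesNext_of_mem {x y z : F} (l : ZMod 3) (hz : (ζ - 1) * z = y - x) (hzH : z ∈ H) :
    threeCopiesNext ζ H (.inl (x - z)) (x, l) = (y, l) := by
  simp only [threeCopiesNext, sub_sub_cancel, hzH, Set.mem_compl_iff, not_true_eq_false,
    not_false_eq_true, Set.indicator_of_notMem, add_zero, Prod.mk.injEq, and_true]
  linear_combination hz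

theorem IsHalfSystem.exists_threeCopiesNext (h : IsHalfSystem ζ H) (u v : F × ZMod 3)
    (huv : u ≠ v) : ∃ i, threeCopiesNext ζ H i u = v ∨ threeCopiesNext ζ H i v = u := by
  have levels (l m : ZMod 3) : l = m ∨ m = l + 1 ∨ l = m + 1 := by decide +revert
  obtain ⟨x, l⟩ := u
  obtain ⟨y, m⟩ := v
  rcases levels l m with rfl | rfl | rfl
  · obtain ⟨z, hz⟩ := h.exists_sub_one_mul_eq (y - x)
    by_cases hzH : z ∈ H
    · exact ⟨_, .inl (threeCopiesNext_of_mem l hz hzH)⟩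
    · have hz0 : z ≠ 0 := by
        rintro rfl
        exact huv (by rw [sub_eq_zero.1 (hz.symm.trans (mul_zero _))])
      exact ⟨_, .inr (threeCopiesNext_of_mem l (by linear_combination -hz)
        ((h.neg_mem_iff hz0).2 hzH))⟩
  · exact (h.exists_threeCopiesNext_add_one x y l).imp fun _ => Or.inl
  · exact (h.exists_threeCopiesNext_add_one y x m).imp fun _ => Or.inr

theorem kirkman_three_mul [Finite F] {j : ℕ} (hF : Nat.card F = 6 * j + 1) : Kirkman (3 * j) := by
  obtain ⟨ζ, H, h⟩ := exists_isHalfSystem hF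
  have hcard := h.card_eq
  refine (KirkmanSystem.ofCovering (I := F ⊕ H) ?_ (threeCopiesNext ζ H) h.iterate_threeCopiesNext
    h.threeCopiesNext_ne h.exists_threeCopiesNext).kirkman ?_
  · rw [Nat.card_prod, Nat.card_zmod, Nat.card_sum, Nat.card_coe_set_eq]
    lia
  · rw [Nat.card_prod, Nat.card_zmod]
    lia

open scoped Classical in
/-- The base parallel class on two copies of `F` and one further point. -/
noncomputable def twoCopiesBase (ζ : F) (H : Set F) : Option (F × Bool) → Option (F × Bool)
  | none => some (0, false)
  | some (x, false) =>
    if x = 0 then some (0, true)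
    else if x ∈ H then some (-(ζ * (ζ * x)), false)
    else some (-(ζ * x), true)
  | some (x, true) =>
    if x = 0 then none
    else if x ∈ H then some (x, false)
    else some (ζ * x, true)

theorem IsHalfSystem.iterate_twoCopiesBase (h : IsHalfSystem ζ H) (v : Option (F × Bool)) :
    (twoCopiesBase ζ H)^[3] v = v := by
  have hcube (x : F) : ζ * (ζ * (ζ * x)) = x := by
    linear_combination x * h.isPrimitiveRoot.pow_eq_one
  rcases v with _ | ⟨x, _ | _⟩
  · simp [twoCopiesBase]
  all_goals
    by_cases hx : x = 0
    · simp [twoCopiesBase, hx]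
    by_cases hxH : x ∈ H <;>
      simp [twoCopiesBase, hx, hxH, h.neg_mul_mem_iff, h.mul_mem_iff, h.ne_zero, hcube]

theorem IsHalfSystem.twoCopiesBase_ne (h : IsHalfSystem ζ H) (v : Option (F × Bool)) :
    twoCopiesBase ζ H v ≠ v := by
  rcases v with _ | ⟨x, _ | _⟩
  · simp [twoCopiesBase]
  all_goals
    by_cases hx : x = 0
    · simp [twoCopiesBase, hx]
    by_cases hxH : x ∈ H
  · have hne : -(ζ * (ζ * x)) ≠ x := fun heq =>
      (h.neg_mul_mem_iff (mul_ne_zero h.ne_zero hx)).1 (heq.symm ▸ hxH) (h.mul_mem_iff.2 hxH)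
    simp [twoCopiesBase, hx, hxH, hne]
  · simp [twoCopiesBase, hx, hxH]
  · simp [twoCopiesBase, hx, hxH]
  · simp [twoCopiesBase, hx, hxH, h.isPrimitiveRoot.ne_one]

/-- The translations that develop `twoCopiesBase`, moving the second copy `a` times as far as the
first. -/
def twoCopiesShift (a k : F) : Option (F × Bool) ≃ Option (F × Bool) :=
  Equiv.optionCongr (Equiv.prodCongrLeft fun l => Equiv.addLeft (bif l then a * k else k))

@[simp]
theorem twoCopiesShift_none (a k : F) : twoCopiesShift a k none = none := rfl

@[simp]
theorem twoCopiesShift_false (a k x : F) :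
    twoCopiesShift a k (some (x, false)) = some (k + x, false) := rfl

@[simp]
theorem twoCopiesShift_true (a k x : F) :
    twoCopiesShift a k (some (x, true)) = some (a * k + x, true) := rfl

/-- The parallel classes on two copies of `F` and one further point. -/
noncomputable def twoCopiesNext (ζ : F) (H : Set F) (a k : F) :
    Option (F × Bool) → Option (F × Bool) :=
  (twoCopiesShift a k).conj (twoCopiesBase ζ H)

theorem twoCopiesNext_shift (ζ : F) (H : Set F) (a k : F) (v : Option (F × Bool)) :
    twoCopiesNext ζ H a k (twoCopiesShift a k v) = twoCopiesShift a k (twoCopiesBase ζ H v) :=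
  ((twoCopiesShift a k).semiconj_conj (twoCopiesBase ζ H) v).symm

theorem IsHalfSystem.iterate_twoCopiesNext (h : IsHalfSystem ζ H) (a k : F)
    (v : Option (F × Bool)) : (twoCopiesNext ζ H a k)^[3] v = v := by
  obtain ⟨w, rfl⟩ := (twoCopiesShift a k).surjective v
  have semiconj := (twoCopiesShift a k).semiconj_conj (twoCopiesBase ζ H)
  rw [twoCopiesNext, ← semiconj.iterate_right 3 w, h.iterate_twoCopiesBase]

theorem IsHalfSystem.twoCopiesNext_ne (h : IsHalfSystem ζ H) (a k : F) (v : Option (F × Bool)) :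
    twoCopiesNext ζ H a k v ≠ v := by
  obtain ⟨w, rfl⟩ := (twoCopiesShift a k).surjective v
  rw [twoCopiesNext_shift, (twoCopiesShift a k).injective.ne_iff]
  exact h.twoCopiesBase_ne w

variable {a : F} {u v w : Option (F × Bool)}

theorem exists_twoCopiesNext_of_shift (k : F) (hu : twoCopiesShift a k w = u)
    (hv : twoCopiesShift a k (twoCopiesBase ζ H w) = v) : ∃ k, twoCopiesNext ζ H a k u = v :=
  ⟨k, by rw [← hu, twoCopiesNext_shift, hv]⟩

theorem exists_twoCopiesNext_none (ha : a ≠ 0) (x : F) (l : Bool) :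
    ∃ k, twoCopiesNext ζ H a k none = some (x, l) ∨ twoCopiesNext ζ H a k (some (x, l)) = none := by
  cases l
  · exact (exists_twoCopiesNext_of_shift (w := none) x (by simp)
      (by simp [twoCopiesBase])).imp fun _ => Or.inl
  · exact (exists_twoCopiesNext_of_shift (w := some (0, true)) (x / a)
      (by simp [mul_div_cancel₀ _ ha]) (by simp [twoCopiesBase])).imp fun _ => Or.inr

theorem exists_twoCopiesNext_true (ha : a ≠ 0) {x y z : F} (hz0 : z ≠ 0) (hz : z ∉ H)
    (hxy : (ζ - 1) * z = y - x) :
    ∃ k, twoCopiesNext ζ H a k (some (x, true)) = some (y, true) := by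
  have hk : a * ((x - z) / a) = x - z := mul_div_cancel₀ _ ha
  refine exists_twoCopiesNext_of_shift (w := some (z, true)) ((x - z) / a) (by simp [hk]) ?_
  simp only [twoCopiesBase, hz, hz0, if_false, twoCopiesShift_true, hk, Option.some.injEq,
    Prod.mk.injEq, and_true]
  linear_combination hxy

namespace IsHalfSystem

theorem exists_twoCopiesNext_false (h : IsHalfSystem ζ H) {x y z : F} (hz : z ∈ H)
    (hxy : ζ * z = y - x) : ∃ k, twoCopiesNext ζ H a k (some (x, false)) = some (y, false) := by
  refine exists_twoCopiesNext_of_shift (w := some (z, false)) (x - z) (by simp) ?_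
  simp only [twoCopiesBase, ne_of_mem_of_not_mem hz h.zero_notMem, hz, if_true, if_false,
    twoCopiesShift_false, Option.some.injEq, Prod.mk.injEq, and_true]
  linear_combination hxy - z * h.sq_eq

theorem exists_twoCopiesNext_false_true (h : IsHalfSystem ζ H) (ha : (ζ + 2) * a = 2) (x y : F) :
    ∃ k, twoCopiesNext ζ H a k (some (x, false)) = some (y, true) ∨
      twoCopiesNext ζ H a k (some (y, true)) = some (x, false) := by
  have hζ : ζ + 2 ≠ 0 := left_ne_zero_of_mul (ha ▸ h.two_ne_zero)
  have hcube := h.isPrimitiveRoot.pow_eq_one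
  obtain ⟨w, hw⟩ : ∃ w, (ζ + 2) * (y - a * x) = w := ⟨_, rfl⟩
  rcases eq_or_ne w 0 with rfl | hw0
  · have hy : a * x = y := (sub_eq_zero.1 ((mul_eq_zero.1 hw).resolve_left hζ)).symm
    exact (exists_twoCopiesNext_of_shift (w := some (0, false)) x (by simp)
      (by simp [twoCopiesBase, hy])).imp fun _ => Or.inl
  by_cases hwH : w ∈ H
  · have hz : ζ * (ζ * w) ∈ H := by rwa [h.mul_mem_iff, h.mul_mem_iff]
    have hy : a * (x - ζ * (ζ * w)) + ζ * (ζ * w) = y := mul_left_cancel₀ hζ (by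
      linear_combination -ζ * (ζ * w) * ha - hw + w * hcube)
    exact (exists_twoCopiesNext_of_shift (w := some (ζ * (ζ * w), true)) (x - ζ * (ζ * w))
      (by simp [hy]) (by simp [twoCopiesBase, hz, h.ne_zero, hw0])).imp fun _ => Or.inr
  · have hz : ζ * w ∉ H := by rwa [h.mul_mem_iff]
    have hy : a * (x - ζ * w) + -(ζ * (ζ * w)) = y := mul_left_cancel₀ hζ (by
      linear_combination -ζ * w * ha - hw - 2 * ζ * w * h.sq_eq + w * hcube)
    exact (exists_twoCopiesNext_of_shift (w := some (ζ * w, false)) (x - ζ * w)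
      (by simp) (by simp [twoCopiesBase, hz, h.ne_zero, hw0, hy])).imp fun _ => Or.inl

theorem exists_twoCopiesNext_fst (h : IsHalfSystem ζ H) (ha : a ≠ 0) {x y : F} (hxy : x ≠ y)
    (l : Bool) : ∃ k, twoCopiesNext ζ H a k (some (x, l)) = some (y, l) ∨
      twoCopiesNext ζ H a k (some (y, l)) = some (x, l) := by
  have ne_zero_of_mul_eq {b z : F} (hz : b * z = y - x) : z ≠ 0 :=
    right_ne_zero_of_mul (hz ▸ sub_ne_zero.2 hxy.symm)
  cases l
  · obtain ⟨z, hz⟩ : ∃ z, ζ * z = y - x := ⟨_, mul_div_cancel₀ _ h.ne_zero⟩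
    by_cases hzH : z ∈ H
    · exact (h.exists_twoCopiesNext_false hzH hz).imp fun _ => Or.inl
    · exact (h.exists_twoCopiesNext_false ((h.neg_mem_iff (ne_zero_of_mul_eq hz)).2 hzH)
        (by linear_combination -hz)).imp fun _ => Or.inr
  · obtain ⟨z, hz⟩ := h.exists_sub_one_mul_eq (y - x)
    have hz0 := ne_zero_of_mul_eq hz
    by_cases hzH : z ∈ H
    · have hneg : -z ∉ H := fun hneg => (h.neg_mem_iff hz0).1 hneg hzH
      exact (exists_twoCopiesNext_true ha (neg_ne_zero.2 hz0) hneg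
        (by linear_combination -hz)).imp fun _ => Or.inr
    · exact (exists_twoCopiesNext_true ha hz0 hzH hz).imp fun _ => Or.inl

theorem exists_twoCopiesNext (h : IsHalfSystem ζ H) (ha : (ζ + 2) * a = 2)
    (u v : Option (F × Bool)) (huv : u ≠ v) :
    ∃ k, twoCopiesNext ζ H a k u = v ∨ twoCopiesNext ζ H a k v = u := by
  have ha0 : a ≠ 0 := right_ne_zero_of_mul (ha ▸ h.two_ne_zero)
  rcases u with _ | ⟨x, l⟩ <;> rcases v with _ | ⟨y, m⟩
  · exact (huv rfl).elim
  · exact exists_twoCopiesNext_none ha0 y m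
  · exact (exists_twoCopiesNext_none ha0 x l).imp fun _ => Or.symm
  · cases l <;> cases m
    · exact h.exists_twoCopiesNext_fst ha0 (by simpa using huv) _
    · exact h.exists_twoCopiesNext_false_true ha x y
    · exact (h.exists_twoCopiesNext_false_true ha y x).imp fun _ => Or.symm
    · exact h.exists_twoCopiesNext_fst ha0 (by simpa using huv) _

end IsHalfSystem

theorem kirkman_two_mul [Finite F] {j : ℕ} (hF : Nat.card F = 6 * j + 1) : Kirkman (2 * j) := by
  obtain ⟨ζ, H, h⟩ := exists_isHalfSystem hF
  have hζ : ζ + 2 ≠ 0 := by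
    have hfactor : ζ + 2 = ζ ^ 2 * (ζ - 1) := by
      linear_combination h.sq_eq - h.isPrimitiveRoot.pow_eq_one
    rw [hfactor]
    exact mul_ne_zero (pow_ne_zero 2 h.ne_zero) h.sub_one_ne_zero
  refine (KirkmanSystem.ofCovering (I := F) ?_ (twoCopiesNext ζ H (2 / (ζ + 2)))
    (h.iterate_twoCopiesNext _) (h.twoCopiesNext_ne _)
    (h.exists_twoCopiesNext (mul_div_cancel₀ _ hζ))).kirkman ?_
  · simp [mul_comm]
  · rw [Finite.card_option, Nat.card_prod, Nat.card_eq_fintype_card (α := Bool), Fintype.card_bool]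
    lia

end FieldSystems

section AllOrders

theorem kirkman_mul_of_isPrimePow {j : ℕ} (h : IsPrimePow (6 * j + 1)) :
    Kirkman (2 * j) ∧ Kirkman (3 * j) := by
  obtain ⟨p, n, hp, hn, hpn⟩ := h
  have : Fact p.Prime := ⟨hp.nat_prime⟩
  have hcard : Nat.card (GaloisField p n) = 6 * j + 1 := by rw [GaloisField.card p n hn.ne', hpn]
  have : Finite (GaloisField p n) := Nat.finite_of_card_ne_zero (by lia)
  exact ⟨kirkman_two_mul hcard, kirkman_three_mul hcard⟩

theorem exists_coprime_six_le {t : ℕ} (ht : 20 ≤ t) (h₁ : t ∉ Set.Icc 26 27)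
    (h₂ : t ∉ Set.Icc 36 43) (h₃ : t ∉ Set.Icc 66 67) :
    ∃ n, n.Coprime 6 ∧ 4 * n ≤ t ∧ t ≤ 5 * n := by
  simp only [Set.mem_Icc, not_and, not_le] at h₁ h₂ h₃
  obtain h | h | h | h | h | h | h : t ≤ 25 ∨ 28 ≤ t ∧ t ≤ 35 ∨ 44 ≤ t ∧ t ≤ 55 ∨
      56 ≤ t ∧ t ≤ 65 ∨ 68 ≤ t ∧ t ≤ 85 ∨ 86 ≤ t ∧ t ≤ 91 ∨ 92 ≤ t := by lia
  · exact ⟨5, by decide, by lia, by lia⟩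
  · exact ⟨7, by decide, by lia, by lia⟩
  · exact ⟨11, by decide, by lia, by lia⟩
  · exact ⟨13, by decide, by lia, by lia⟩
  · exact ⟨17, by decide, by lia, by lia⟩
  · exact ⟨19, by decide, by lia, by lia⟩
  · exact ⟨6 * ((t + 4) / 24 - 1) + 5, (Nat.coprime_mul_left_add_left 5 6 _).2 (by decide),
      by lia, by lia⟩

theorem kirkman_of_lt_twenty {t : ℕ} (ht : t < 20) : Kirkman t := by
  obtain ⟨htwo, hthree⟩ := kirkman_mul_of_isPrimePow (j := 1) (by norm_num : Nat.Prime 7).isPrimePow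
  obtain ⟨hfour, hsix⟩ := kirkman_mul_of_isPrimePow (j := 2) (by norm_num : Nat.Prime 13).isPrimePow
  have hnine := (kirkman_mul_of_isPrimePow (j := 3) (by norm_num : Nat.Prime 19).isPrimePow).2
  obtain ⟨height, htwelve⟩ := kirkman_mul_of_isPrimePow (j := 4)
    ((by norm_num : Nat.Prime 5).isPrimePow.pow two_ne_zero)
  obtain ⟨hten, hfifteen⟩ :=
    kirkman_mul_of_isPrimePow (j := 5) (by norm_num : Nat.Prime 31).isPrimePow
  have heighteen := (kirkman_mul_of_isPrimePow (j := 6) (by norm_num : Nat.Prime 37).isPrimePow).2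
  have hfourteen := (kirkman_mul_of_isPrimePow (j := 7) (by norm_num : Nat.Prime 43).isPrimePow).1
  have hfive := Kirkman.four_mul_add (by decide) kirkman_one kirkman_one le_rfl
  interval_cases t
  exacts [kirkman_zero, kirkman_one, htwo, hthree, hfour, hfive, hsix,
    kirkman_one.two_mul_mul_add_add htwo, height, hnine, hten, htwo.eleven, htwelve,
    kirkman_one.two_mul_mul_add_add hfour, hfourteen, hfifteen,
    kirkman_one.two_mul_mul_add_add hfive, htwo.two_mul_mul_add_add hthree, heighteen,
    kirkman_one.two_mul_mul_add_add hsix]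

theorem kirkman (t : ℕ) : Kirkman t := by
  induction t using Nat.strong_induction_on with | h t ih
  rcases lt_or_ge t 20 with ht | ht
  · exact kirkman_of_lt_twenty ht
  by_cases h₁ : t ∈ Set.Icc 26 27
  · obtain rfl | rfl : t = 26 ∨ t = 27 := by rw [Set.mem_Icc] at h₁; lia
    · exact (kirkman_mul_of_isPrimePow (j := 13) (by norm_num : Nat.Prime 79).isPrimePow).1
    · exact (ih 2 (by lia)).two_mul_mul_add_add (ih 5 (by lia))
  by_cases h₂ : t ∈ Set.Icc 36 43
  · obtain ⟨m, rfl⟩ := Nat.exists_eq_add_of_le h₂.1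
    have hm : 36 + m ≤ 43 := h₂.2
    exact Kirkman.thirty_six_add (ih 9 (by lia)) (ih m (by lia)) (by lia)
  by_cases h₃ : t ∈ Set.Icc 66 67
  · obtain rfl | rfl : t = 66 ∨ t = 67 := by rw [Set.mem_Icc] at h₃; lia
    · exact (ih 3 (by lia)).two_mul_mul_add_add (ih 9 (by lia))
    · exact (ih 1 (by lia)).two_mul_mul_add_add (ih 22 (by lia))
  obtain ⟨n, hn, hle, hge⟩ := exists_coprime_six_le ht h₁ h₂ h₃
  obtain ⟨m, rfl⟩ := Nat.exists_eq_add_of_le hle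
  exact Kirkman.four_mul_add hn (ih n (by lia)) (ih m (by lia)) (by lia)

end AllOrders

section TwentyOnePoints

/-- A partition of the edges of `G` into `r` triangle factors and `s` heptagon factors. -/
abbrev TriangleHeptagonFactorization {V : Type*} (G : SimpleGraph V) (r s : ℕ) :=
  CycleFactorization G (Sum.elim (fun _ : Fin r => 3) (fun _ : Fin s => 7))

/-- Multiplication by two on `ZMod 7` has order three, so it combines with the cyclic shift of the
three parts to a symmetry of order three. -/
def doubling (v : ZMod 3 × ZMod 7) : ZMod 3 × ZMod 7 := (v.1 + 1, 2 * v.2)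

/-- The images of a cycle under the powers of `doubling`. -/
def doublingOrbit (C : List (ZMod 3 × ZMod 7)) : List (List (ZMod 3 × ZMod 7)) :=
  [C, C.map doubling, C.map (doubling ∘ doubling)]

/-- The factor with the given cycles, translated by `c` in every part. -/
def translateNext (cycles : List (List (ZMod 3 × ZMod 7))) (c : Fin 7) (v : ZMod 3 × ZMod 7) :
    ZMod 3 × ZMod 7 :=
  (cycles.map List.formPerm).prod (v - (0, (c : ZMod 7))) + (0, (c : ZMod 7))

/-- Triangle factors with prescribed shifts `d i` between the parts, and pairs of heptagon factors
with constant shift on `ZMod 7` that run through the parts in opposite directions. A heptagon takes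
five steps forward and two back, hence returns to its first part. -/
def shiftNext {r s : ℕ} (d : Fin r → ZMod 3 → ZMod 7) :
    Fin r ⊕ Fin s → ZMod 3 × ZMod 7 → ZMod 3 × ZMod 7
  | .inl i, (l, x) => (l + 1, x + d i l)
  | .inr j, (l, x) => (l + (-1) ^ j.val * if x = 0 ∨ x = 1 then -1 else 1, x + (j.val / 2 + 1 : ℕ))

theorem nonempty_factorization_multipartite {r s : ℕ} (hr : r ∈ ({0, 1, 3, 5, 7} : Set ℕ))
    (hrs : r + s = 7) :
    Nonempty (TriangleHeptagonFactorization (multipartite (ZMod 3) (ZMod 7)) r s) := by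
  rcases hr with rfl | rfl | rfl | rfl | rfl
  · obtain rfl : s = 7 := by lia
    exact ⟨Sum.elim Fin.elim0 (translateNext (doublingOrbit
        [(0, 0), (1, 1), (0, 2), (1, 2), (2, 5), (0, 6), (1, 3)])),
      by decide +kernel, by decide +kernel, by simp only [ExistsUnique]; decide +kernel⟩
  · obtain rfl : s = 6 := by lia
    exact ⟨shiftNext ![![0, 0, 0]],
      by decide +kernel, by decide +kernel, by simp only [ExistsUnique]; decide +kernel⟩
  · obtain rfl : s = 4 := by lia
    exact ⟨shiftNext ![![0, 3, 4], ![3, 4, 0], ![4, 0, 3]],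
      by decide +kernel, by decide +kernel, by simp only [ExistsUnique]; decide +kernel⟩
  · obtain rfl : s = 2 := by lia
    exact ⟨shiftNext ![![0, 2, 5], ![2, 3, 2], ![3, 4, 0], ![4, 0, 3], ![5, 5, 4]],
      by decide +kernel, by decide +kernel, by simp only [ExistsUnique]; decide +kernel⟩
  · obtain rfl : s = 0 := by lia
    exact ⟨(CycleFactorization.tripartite (n := 7) (by decide)).reindex (Equiv.sumEmpty _ _)
      (Sum.rec (fun _ => rfl) fun j => j.elim0)⟩

/-- The three step lengths in the parts give three heptagon factors. -/
def fibreFactorization :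
    CycleFactorization (multipartite (ZMod 3) (ZMod 7))ᶜ (fun _ : Fin 3 => 7) where
  next j v := (v.1, v.2 + (j.val + 1 : ℕ))
  iterate_next := by decide +kernel
  adj_next := by decide +kernel
  existsUnique_next := by simp only [ExistsUnique]; decide +kernel

/-- The seven translates of the factor with the given cycles, together with triangle factors and
heptagon factors whose shifts `c i` and `u j` are doubled from each part to the next, so that
`doubling` fixes them. -/
def twentyOneNext {r s : ℕ} (cycles : List (List (ZMod 3 × ZMod 7))) (c : Fin r → ZMod 7)
    (u : Fin s → ZMod 7) : (Fin 7 ⊕ Fin r) ⊕ Fin s → ZMod 3 × ZMod 7 → ZMod 3 × ZMod 7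
  | .inl (.inl a), v => translateNext cycles a v
  | .inl (.inr i), (l, x) => (l + 1, x + 2 ^ l.val * c i)
  | .inr j, (l, x) => (l, x + 2 ^ l.val * u j)

/-- Eight triangle factors and two heptagon factors, from a base factor fixed by `doubling`. -/
def eightTriangleFactors : CycleFactorization (⊤ : SimpleGraph (ZMod 3 × ZMod 7))
    (Sum.elim (fun _ : Fin 7 ⊕ Fin 1 => 3) (fun _ : Fin 2 => 7)) where
  next := twentyOneNext ([(0, 0), (1, 0), (2, 0)] :: doublingOrbit [(0, 1), (0, 2), (1, 5)] ++
    doublingOrbit [(0, 3), (1, 1), (2, 6)]) ![2] ![2, 3]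
  iterate_next := by decide +kernel
  adj_next := by decide +kernel
  existsUnique_next := by simp only [ExistsUnique]; decide +kernel

/-- Nine triangle factors and one heptagon factor, from a base factor fixed by `doubling`. -/
def nineTriangleFactors : CycleFactorization (⊤ : SimpleGraph (ZMod 3 × ZMod 7))
    (Sum.elim (fun _ : Fin 7 ⊕ Fin 2 => 3) (fun _ : Fin 1 => 7)) where
  next := twentyOneNext ([(0, 0), (1, 0), (2, 0)] :: doublingOrbit [(0, 1), (0, 2), (1, 5)] ++
    doublingOrbit [(0, 3), (0, 5), (2, 2)]) ![1, 5] ![3]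
  iterate_next := by decide +kernel
  adj_next := by decide +kernel
  existsUnique_next := by simp only [ExistsUnique]; decide +kernel

theorem nonempty_factorization_top_of_multipartite {r s : ℕ}
    (h : Nonempty (TriangleHeptagonFactorization (multipartite (ZMod 3) (ZMod 7)) r s)) :
    Nonempty (TriangleHeptagonFactorization (⊤ : SimpleGraph (ZMod 3 × ZMod 7)) r (s + 3)) := by
  obtain ⟨F⟩ := h
  rw [← sup_compl_eq_top (x := multipartite (ZMod 3) (ZMod 7))]
  exact ⟨(F.sum fibreFactorization disjoint_compl_right).reindex
    (((Equiv.refl _).sumCongr finSumFinEquiv.symm).trans (Equiv.sumAssoc _ _ _).symm) (by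
      rintro (i | j)
      · rfl
      · rcases h : finSumFinEquiv.symm j with j' | j' <;> simp [h])⟩

theorem nonempty_factorization_top {r s : ℕ} (hr : r ∈ ({0, 1, 3, 5, 7, 8, 9, 10} : Set ℕ))
    (hrs : r + s = 10) :
    Nonempty (TriangleHeptagonFactorization (⊤ : SimpleGraph (ZMod 3 × ZMod 7)) r s) := by
  by_cases hr7 : r ≤ 7
  · obtain ⟨s', rfl⟩ : ∃ s', s = s' + 3 := ⟨s - 3, by lia⟩
    refine nonempty_factorization_top_of_multipartite
      (nonempty_factorization_multipartite ?_ (by lia))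
    simp only [Set.mem_insert_iff, Set.mem_singleton_iff] at hr ⊢
    lia
  · obtain ⟨rfl, rfl⟩ | ⟨rfl, rfl⟩ | ⟨rfl, rfl⟩ :
        (r = 8 ∧ s = 2) ∨ (r = 9 ∧ s = 1) ∨ (r = 10 ∧ s = 0) := by lia
    · exact ⟨eightTriangleFactors.reindex
        ((finSumFinEquiv (m := 7) (n := 1)).symm.sumCongr (Equiv.refl _))
        (by rintro (_ | _) <;> rfl)⟩
    · exact ⟨nineTriangleFactors.reindex
        ((finSumFinEquiv (m := 7) (n := 2)).symm.sumCongr (Equiv.refl _))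
        (by rintro (_ | _) <;> rfl)⟩
    · obtain ⟨F⟩ := (kirkman 3).nonempty_system (V := ZMod 3 × ZMod 7) (I := Fin 10)
        (by simp) (by simp)
      exact ⟨F.reindex (Equiv.sumEmpty _ _) (Sum.rec (fun _ => rfl) fun j => j.elim0)⟩

end TwentyOnePoints

/-- Lemma 4.2: for `n = 42t + 21`, if `αᵢ ∈ {0,1,3,5,7}` with `αᵢ + βᵢ = 7` for
`i = 1, …, 3t`, and `γ ∈ {0,1,3,5,7,8,9,10}` with `γ + δ = 10`, then
`HW(n; Σαᵢ + γ, Σβᵢ + δ; 3, 7)` exists. -/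
theorem HW_from_pieces (t : ℕ) (α β : Fin (3 * t) → ℕ) (γ δ : ℕ)
    (hα : ∀ i, α i ∈ ({0, 1, 3, 5, 7} : Set ℕ)) (hαβ : ∀ i, α i + β i = 7)
    (hγ : γ ∈ ({0, 1, 3, 5, 7, 8, 9, 10} : Set ℕ)) (hγδ : γ + δ = 10) :
    IsCycleDecomp (⊤ : SimpleGraph (Fin (42 * t + 21))) 3 7
      ((∑ i, α i) + γ) ((∑ i, β i) + δ) := by
  have : Fact (Nat.Prime 7) := ⟨by norm_num⟩
  obtain ⟨F⟩ := (kirkman t).nonempty_system (V := Fin (6 * t + 3)) (I := Option (Fin (3 * t)))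
    (by simp) (by simp)
  obtain ⟨complete⟩ := nonempty_factorization_top hγ hγδ
  have partite i := Classical.choice (nonempty_factorization_multipartite (hα i) (hαβ i))
  obtain ⟨inflated⟩ := F.nonempty_inflate
    (J := fun o => Fin (o.elim γ α) ⊕ Fin (o.elim δ β))
    (k := fun _ => Sum.elim (fun _ => 3) (fun _ => 7))
    complete partite
  have vertices : Fin (42 * t + 21) ≃ Fin (6 * t + 3) × ZMod 7 :=
    (Finite.equivFinOfCardEq (by
      rw [Nat.card_prod, Nat.card_fin, Nat.card_zmod]
      ring)).symm
  exact ((inflated.comap (Iso.completeGraph vertices)).reindex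
      (l := Sum.elim (fun _ => 3) (fun _ => 7)) (Equiv.sigmaSumDistrib _ _).symm
      (Sum.rec (fun _ => rfl) fun _ => rfl)).isCycleDecomp
    (by simp [Fintype.sum_option, add_comm]) (by simp [Fintype.sum_option, add_comm])
end
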